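/- arXiv:2302.05946 — 4 statements merged into one kernel-verified Lean document; each statement's English description precedes it below -/
import Mathlib

section
/- There exists a constant C_K > 0, depending only on the number field K, such that in the number-field distortion setup, for every collection A as above, every choice of parameters δ_1, …, δ_J ∈ [0,1/2], and every 1 ≤ j ≤ J, one has M_j^{(2)} ≤ C_K · s² · (log N(p_j))^6 / N(p_j)². -/
/-!
Write `p_1, …, p_J` for the primes of `Q` in order of norm. If `I_i` has largest prime `p_j`, then
`I_i = m_i * p_j ^ e_i` with `e_i ≥ 1` and `m_i` a product of powers of `p_1, …, p_{j-1}`. A fibre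
of `π_{j-1}` meets the class `a_i + I_i` only if it lies in `a_i + m_i`, and then in a proportion
`N(p_j) ^ (-e_i)`. A union bound gives `α_j(x) ≤ ∑ N(p_j) ^ (-e_i)`, over the `i` with
`x ∈ a_i + m_i`, and squaring turns the second moment into a sum over pairs `(i, i')` of
`N(p_j) ^ (-e_i - e_{i'})` times the `P_{j-1}`-mass of `(a_i + m_i) ∩ (a_{i'} + m_{i'})`, which is
empty or a class modulo `lcm(m_i, m_{i'})`.

The `P_l`-mass of a class modulo `∏ p_k ^ f_k` (`k ≤ l`) is at most `∏ massWeight (N p_k) (f_k)`,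
that is, `∏ 2 / N(p_k) ^ f_k` over the `k` with `f_k > 0`. This follows by induction on `l` from
`distortion_step`: a step at most doubles every weight, keeps the measure uniform on the relevant
fibres, and does not change the mass of sets that are unions of fibres of the previous projection.

At most `s` of the `I_i` share an exponent vector, so the double sum is at most `s ^ 2` times an
Euler product (`sum_sum_prod_le`). The factor at `p_j` is at most `4 / N(p_j) ^ 2`
(`top_factor_le`), and the factor at an earlier prime of norm `N` is
`1 + ∑ (2 t + 1) * 2 / N ^ t ≤ exp (6 / N + 40 / N ^ 2)` (`local_factor_le`).

It remains to bound `exp (6 * ∑ 1 / N(p))`, over `N(p) ≤ x`, by a constant times `(log x) ^ 6`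
(`exists_exp_sum_primes_le`). Comparing with the simple pole of the Dedekind zeta function at
`σ = 1 + c / log x` bounds `∏ (1 + N(p) ^ (-σ))` by a constant times `log x`. Replacing
`N(p) ^ (-σ)` by `N(p) ^ (-1)` costs at most `(σ - 1) * ∑ log N(p) / N(p)`, and this is bounded
because `∑ log N(p) / N(p)` is at most a constant times `log x` (`exists_sum_log_div_le`), by
counting the pairs `p ∣ I` with `N(I) ≤ x`.
-/

set_option maxHeartbeats 1000000
set_option synthInstance.maxHeartbeats 1000000

open scoped Classical
open NumberField

/-- `p` is the unique prime ideal factor of `I` of largest norm. -/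
def IsPmin {K : Type*} [Field K] [NumberField K] (I p : Ideal (𝓞 K)) : Prop :=
  p.IsPrime ∧ p ∣ I ∧ ∀ q : Ideal (𝓞 K), q.IsPrime → q ∣ I → q ≠ p →
    Ideal.absNorm q < Ideal.absNorm p

/-- A nonzero proper ideal is distinguishable if it has a unique prime factor of largest norm. -/
def Distinguishable {K : Type*} [Field K] [NumberField K] (I : Ideal (𝓞 K)) : Prop :=
  I ≠ ⊥ ∧ I ≠ ⊤ ∧ ∃ p : Ideal (𝓞 K), IsPmin I p

/-! ### Prime ideals and a Mertens bound -/

open Filter Topology in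
/-- Two-sided linear bounds for the number of nonzero ideals of norm at most `n`, encoded by a
function `L` listing these ideals. -/
theorem exists_normLE (K : Type*) [Field K] [NumberField K] :
    ∃ (L : ℕ → Finset (Ideal (𝓞 K))) (c C : ℝ), 0 < c ∧ 0 < C ∧
      (∀ n I, I ∈ L n ↔ I ≠ ⊥ ∧ Ideal.absNorm I ≤ n) ∧
      ∀ n, 1 ≤ n → c * n ≤ (L n).card ∧ ((L n).card : ℝ) ≤ C * n := by
  let L : ℕ → Finset (Ideal (𝓞 K)) := fun n =>
    (Ideal.finite_setOfPred_absNorm_le (S := 𝓞 K) n).toFinset.erase ⊥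
  have hL : ∀ n I, I ∈ L n ↔ I ≠ ⊥ ∧ Ideal.absNorm I ≤ n := by
    intro n I
    simp [L]
  have hcard : ∀ n : ℕ, Nat.card {I : Ideal (𝓞 K) // Ideal.absNorm I ≤ n} = (L n).card + 1 := by
    intro n
    rw [Finset.card_erase_add_one (by simp)]
    rw [← Set.ncard_eq_toFinset_card _ (Ideal.finite_setOfPred_absNorm_le (S := 𝓞 K) n)]
    rfl
  obtain ⟨κ, hκ, hlim⟩ : ∃ κ : ℝ, 0 < κ ∧
      Tendsto (fun n : ℕ => ((L n).card : ℝ) / n) atTop (𝓝 κ) := by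
    refine ⟨_, dedekindZeta_residue_pos K, ?_⟩
    have h1 := (Ideal.tendsto_norm_le_div_atTop K).comp tendsto_natCast_atTop_atTop
    have h2 := h1.sub (tendsto_inv_atTop_nhds_zero_nat (𝕜 := ℝ))
    rw [sub_zero] at h2
    refine h2.congr fun n => ?_
    simp only [Function.comp_apply, Nat.cast_le, hcard]
    push_cast
    ring
  have e1 := hlim.eventually (lt_mem_nhds (half_lt_self hκ))
  have e2 := hlim.eventually (gt_mem_nhds (show κ < 2 * κ by linarith))
  obtain ⟨n0, hn0⟩ := eventually_atTop.1 (e1.and e2)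
  have hmono : ∀ m n, m ≤ n → (L m).card ≤ (L n).card := by
    intro m n hmn
    refine Finset.card_le_card fun I hI => ?_
    rw [hL] at hI ⊢
    exact ⟨hI.1, hI.2.trans hmn⟩
  have hone : ∀ n, 1 ≤ n → 1 ≤ (L n).card := by
    intro n hn
    refine Finset.card_pos.2 ⟨⊤, (hL _ _).2 ⟨top_ne_bot, by simpa using hn⟩⟩
  refine ⟨L, min (κ / 2) (1 / (n0 + 1)), 2 * κ + (L n0).card, by positivity, by positivity, hL, ?_⟩
  intro n hn
  have hnpos : (0 : ℝ) < n := by exact_mod_cast hn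
  have hn1 : (1 : ℝ) ≤ n := by exact_mod_cast hn
  rcases le_total n0 n with h | h
  · obtain ⟨a1, a2⟩ := hn0 n h
    rw [lt_div_iff₀ hnpos] at a1
    rw [div_lt_iff₀ hnpos] at a2
    constructor
    · exact (mul_le_mul_of_nonneg_right (min_le_left _ _) hnpos.le).trans a1.le
    · have : (0 : ℝ) ≤ (L n0).card * n := by positivity
      nlinarith
  · constructor
    · have h1 : (1 : ℝ) ≤ (L n).card := by exact_mod_cast hone n hn
      have h2 : (n : ℝ) ≤ n0 := by exact_mod_cast h
      refine le_trans (mul_le_mul_of_nonneg_right (min_le_right _ _) hnpos.le) (le_trans ?_ h1)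
      rw [one_div, inv_mul_le_iff₀ (by positivity)]
      linarith
    · have h1 : ((L n).card : ℝ) ≤ (L n0).card := by exact_mod_cast hmono n n0 h
      have : (0 : ℝ) ≤ 2 * κ * n := by positivity
      have h3 : (0 : ℝ) ≤ (L n0).card := by positivity
      nlinarith

/-- A Mertens-type bound, obtained by counting the pairs `p ∣ I` with `N(I) ≤ x`. -/
theorem exists_sum_log_div_le (K : Type*) [Field K] [NumberField K] :
    ∃ A : ℝ, 0 < A ∧ ∀ (x : ℕ) (S : Finset (Ideal (𝓞 K))),
      (∀ p ∈ S, p.IsPrime ∧ p ≠ ⊥ ∧ Ideal.absNorm p ≤ x) →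
      ∑ p ∈ S, Real.log (Ideal.absNorm p) / Ideal.absNorm p ≤ A * Real.log x := by
  obtain ⟨L, c, C, hc, hC, hL, hcard⟩ := exists_normLE K
  refine ⟨2 * C / c, by positivity, fun x S hS => ?_⟩
  rcases Nat.eq_zero_or_pos x with rfl | hx
  · have : S = ∅ := by
      refine Finset.eq_empty_of_forall_notMem fun p hp => ?_
      have := hS p hp
      exact this.2.1 (Ideal.absNorm_eq_zero_iff.1 (Nat.le_zero.1 this.2.2))
    simp [this]
  have hxpos : (0 : ℝ) < x := by exact_mod_cast hx
  have hlogN : ∀ I : Ideal (𝓞 K), 0 ≤ Real.log (Ideal.absNorm I) := fun I =>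
    Real.log_natCast_nonneg _
  have hNpos : ∀ I : Ideal (𝓞 K), I ≠ ⊥ → 0 < Ideal.absNorm I := fun I hI =>
    Nat.pos_of_ne_zero fun h => hI (Ideal.absNorm_eq_zero_iff.1 h)
  have up : ∑ I ∈ L x, ∑ p ∈ S with p ∣ I, Real.log (Ideal.absNorm p) ≤
      C * x * Real.log x := by
    have : ∀ I ∈ L x, ∑ p ∈ S with p ∣ I, Real.log (Ideal.absNorm p) ≤ Real.log x := by
      intro I hI
      obtain ⟨hI0, hIx⟩ := (hL _ _).1 hI
      have hdvd : (∏ p ∈ S with p ∣ I, p) ∣ I := by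
        refine Finset.prod_primes_dvd I ?_ ?_
        · intro p hp
          have := hS p (Finset.mem_filter.1 hp).1
          exact Ideal.prime_of_isPrime this.2.1 this.1
        · intro p hp
          exact (Finset.mem_filter.1 hp).2
      have h2 := Nat.le_of_dvd (hNpos I hI0) (map_dvd Ideal.absNorm hdvd)
      rw [map_prod] at h2
      rw [← Real.log_prod]
      · refine Real.log_le_log ?_ ?_
        · refine Finset.prod_pos fun p hp => ?_
          exact_mod_cast hNpos p (hS p (Finset.mem_filter.1 hp).1).2.1
        · exact_mod_cast h2.trans hIx
      · intro p hp
        exact_mod_cast (hNpos p (hS p (Finset.mem_filter.1 hp).1).2.1).ne'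
    refine (Finset.sum_le_sum this).trans ?_
    rw [Finset.sum_const, nsmul_eq_mul]
    exact mul_le_mul_of_nonneg_right (hcard x hx).2 (Real.log_natCast_nonneg _)
  have low : c / 2 * x * ∑ p ∈ S, Real.log (Ideal.absNorm p) / Ideal.absNorm p ≤
      ∑ I ∈ L x, ∑ p ∈ S with p ∣ I, Real.log (Ideal.absNorm p) := by
    simp_rw [Finset.sum_filter]
    rw [Finset.sum_comm, Finset.mul_sum]
    refine Finset.sum_le_sum fun p hp => ?_
    obtain ⟨hp1, hp0, hpx⟩ := hS p hp
    have hNp := hNpos p hp0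
    rw [← Finset.sum_filter, Finset.sum_const, nsmul_eq_mul]
    have hinj : (L (x / Ideal.absNorm p)).card ≤ (L x |>.filter fun I => p ∣ I).card := by
      refine Finset.card_le_card_of_injOn (fun I => p * I) ?_ ?_
      · intro I hI
        obtain ⟨hI0, hIx⟩ := (hL _ _).1 (Finset.mem_coe.1 hI)
        refine Finset.mem_coe.2 (Finset.mem_filter.2 ⟨(hL _ _).2 ⟨mul_ne_zero hp0 hI0, ?_⟩,
          Dvd.intro _ rfl⟩)
        rw [map_mul, mul_comm]
        exact (Nat.le_div_iff_mul_le hNp).1 hIx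
      · intro I _ I' _ h
        exact mul_left_cancel₀ hp0 h
    have hdiv1 : 1 ≤ x / Ideal.absNorm p := (Nat.one_le_div_iff hNp).2 hpx
    have h1 := (hcard _ hdiv1).1
    have h2 : (x : ℝ) ≤ 2 * (x / Ideal.absNorm p : ℕ) * Ideal.absNorm p := by
      have h3 := Nat.lt_div_mul_add hNp (a := x)
      have h4 : Ideal.absNorm p ≤ x / Ideal.absNorm p * Ideal.absNorm p :=
        Nat.le_mul_of_pos_left _ hdiv1
      have : x ≤ 2 * (x / Ideal.absNorm p) * Ideal.absNorm p := by nlinarith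
      exact_mod_cast this
    have h5 : c / 2 * x / Ideal.absNorm p ≤ ((L x |>.filter fun I => p ∣ I).card : ℝ) := by
      rw [div_le_iff₀ (by exact_mod_cast hNp)]
      have h6 : ((L (x / Ideal.absNorm p)).card : ℝ) ≤
        ((L x |>.filter fun I => p ∣ I).card : ℝ) := by exact_mod_cast hinj
      calc c / 2 * x ≤ c / 2 * (2 * (x / Ideal.absNorm p : ℕ) * Ideal.absNorm p) := by gcongr
        _ = (c * (x / Ideal.absNorm p : ℕ)) * Ideal.absNorm p := by ring
        _ ≤ _ := by gcongr; exact h1.trans h6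
    calc c / 2 * x * (Real.log (Ideal.absNorm p) / Ideal.absNorm p)
        = (c / 2 * x / Ideal.absNorm p) * Real.log (Ideal.absNorm p) := by ring
      _ ≤ _ := mul_le_mul_of_nonneg_right h5 (hlogN p)
  have h := low.trans up
  rw [div_mul_eq_mul_div, le_div_iff₀ hc]
  have h7 : x * ((∑ p ∈ S, Real.log (Ideal.absNorm p) / Ideal.absNorm p) * c) ≤
      x * (2 * C * Real.log x) := by nlinarith
  exact le_of_mul_le_mul_left h7 hxpos

open Filter Topology in
/-- Partial sums of the Dedekind zeta function near its simple pole. -/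
theorem exists_sum_rpow_le (K : Type*) [Field K] [NumberField K] :
    ∃ ε A : ℝ, 0 < ε ∧ 0 < A ∧ ∀ σ : ℝ, 1 < σ → σ < 1 + ε →
      ∀ T : Finset (Ideal (𝓞 K)), ⊥ ∉ T →
        ∑ I ∈ T, (Ideal.absNorm I : ℝ) ^ (-σ) ≤ A / (σ - 1) := by
  have hκ := dedekindZeta_residue_pos K
  set κ := dedekindZeta_residue K
  have hlim := (tendsto_sub_one_mul_dedekindZeta_nhdsGT K).norm
  have e0 : ‖(κ : ℂ)‖ = κ := by simp [abs_of_pos hκ]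
  rw [show ‖(dedekindZeta_residue K : ℂ)‖ = κ from e0] at hlim
  have e1 := hlim.eventually (lt_mem_nhds hκ)
  have e2 := hlim.eventually (gt_mem_nhds (show κ < 2 * κ by linarith))
  obtain ⟨u, hu, hu'⟩ := mem_nhdsGT_iff_exists_Ioo_subset.1 (e1.and e2)
  have hu1 : (1 : ℝ) < u := hu
  refine ⟨u - 1, 2 * κ, by linarith, by linarith, fun σ hσ hσu T hT => ?_⟩
  obtain ⟨b1, b2⟩ := hu' ⟨hσ, by linarith⟩
  have hσ0 : 0 < σ - 1 := by linarith
  have hnorm : ‖((σ : ℂ) - 1) * dedekindZeta K σ‖ = (σ - 1) * ‖dedekindZeta K σ‖ := by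
    rw [norm_mul]
    congr 1
    rw [show ((σ : ℂ) - 1) = ((σ - 1 : ℝ) : ℂ) by push_cast; rfl, Complex.norm_real,
      Real.norm_of_nonneg hσ0.le]
  rw [hnorm] at b1 b2
  let a : ℕ → ℝ := fun n => Nat.card {I : Ideal (𝓞 K) // Ideal.absNorm I = n}
  let t : ℕ → ℝ := fun n => if n = 0 then 0 else a n / (n : ℝ) ^ σ
  have ht : ∀ n, LSeries.term (fun n ↦ (Nat.card {I : Ideal (𝓞 K) // Ideal.absNorm I = n} : ℂ))
      σ n = (t n : ℂ) := by
    intro n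
    rw [LSeries.term_def]
    simp only [t, a]
    split_ifs with h
    · simp
    · push_cast
      rw [Complex.ofReal_cpow (by positivity)]
      simp
  have ht0 : ∀ n, 0 ≤ t n := by
    intro n
    simp only [t, a]
    split_ifs <;> positivity
  have hz : dedekindZeta K σ = ((∑' n, t n : ℝ) : ℂ) := by
    rw [dedekindZeta, LSeries, Complex.ofReal_tsum]
    exact tsum_congr ht
  -- the series converges, since otherwise the junk value `0` of the sum would contradict `b1`
  have hsum : Summable t := by
    by_contra hns
    rw [hz, tsum_eq_zero_of_not_summable hns] at b1
    simp at b1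
  have hzn : ‖dedekindZeta K σ‖ = ∑' n, t n := by
    rw [hz, Complex.norm_real, Real.norm_of_nonneg (tsum_nonneg ht0)]
  rw [hzn] at b2
  have hT' : ∑ I ∈ T, (Ideal.absNorm I : ℝ) ^ (-σ) ≤ ∑' n, t n := by
    refine le_trans ?_ (hsum.sum_le_tsum (T.image Ideal.absNorm) fun n _ => ht0 n)
    rw [← Finset.sum_fiberwise_of_maps_to (g := Ideal.absNorm) (t := T.image Ideal.absNorm)
      (fun I hI => Finset.mem_image_of_mem _ hI)]
    refine Finset.sum_le_sum fun n hn => ?_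
    have hn0 : n ≠ 0 := by
      rintro rfl
      obtain ⟨I, hI, hI0⟩ := Finset.mem_image.1 hn
      exact hT (Ideal.absNorm_eq_zero_iff.1 hI0 ▸ hI)
    have : ∑ I ∈ T with Ideal.absNorm I = n, (Ideal.absNorm I : ℝ) ^ (-σ) =
        ∑ I ∈ T with Ideal.absNorm I = n, (n : ℝ) ^ (-σ) :=
      Finset.sum_congr rfl fun I hI => by rw [(Finset.mem_filter.1 hI).2]
    rw [this, Finset.sum_const, nsmul_eq_mul]
    simp only [t, a, if_neg hn0]
    rw [Real.rpow_neg (by positivity), div_eq_mul_inv]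
    refine mul_le_mul_of_nonneg_right ?_ (by positivity)
    have hfin := Ideal.finite_setOfPred_absNorm_eq (S := 𝓞 K) n
    have h1 : Nat.card {I : Ideal (𝓞 K) // Ideal.absNorm I = n} = hfin.toFinset.card := by
      rw [← Set.ncard_eq_toFinset_card _ hfin]
      rfl
    rw [h1]
    exact_mod_cast Finset.card_le_card fun I hI => by
      simpa using (Finset.mem_filter.1 hI).2
  rw [le_div_iff₀ hσ0]
  nlinarith

/-- The Mertens product bound for prime ideals, with the sharp power of the logarithm. It compares
the product with the Dedekind zeta function at `σ = 1 + c / log x`. -/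
theorem exists_exp_sum_primes_le (K : Type*) [Field K] [NumberField K] :
    ∃ C : ℝ, 0 < C ∧ ∀ (x : ℕ) (S : Finset (Ideal (𝓞 K))), 2 ≤ x →
      (∀ p ∈ S, p.IsPrime ∧ p ≠ ⊥ ∧ Ideal.absNorm p ≤ x) →
      Real.exp (∑ p ∈ S, (6 / (Ideal.absNorm p : ℝ) + 40 / (Ideal.absNorm p : ℝ) ^ 2)) ≤
        C * Real.log x ^ 6 := by
  obtain ⟨ε, A, hε, hA, hZ⟩ := exists_sum_rpow_le K
  obtain ⟨A', hA', hM⟩ := exists_sum_log_div_le K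
  set η := min ε 1 / 2 with hη
  have hη0 : 0 < η := by positivity
  have hηε : η < ε := by
    have := min_le_left ε 1
    have : 0 < min ε 1 := by positivity
    linarith
  have hη1 : η ≤ 1 := by
    have := min_le_right ε 1
    linarith
  have hlog2 : 0 < Real.log 2 := Real.log_pos (by norm_num)
  set c := η * Real.log 2 with hc
  have hc0 : 0 < c := by positivity
  set D := A / η with hD
  refine ⟨(A / c) ^ 6 * Real.exp (6 * (D + c * A') + 40 * D), by positivity, ?_⟩
  intro x S hx hS
  have hx2 : (2 : ℝ) ≤ x := by exact_mod_cast hx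
  have hlogx : Real.log 2 ≤ Real.log x := Real.log_le_log (by norm_num) hx2
  have hlx : 0 < Real.log x := hlog2.trans_le hlogx
  have hNpos : ∀ I : Ideal (𝓞 K), I ≠ ⊥ → 1 ≤ (Ideal.absNorm I : ℝ) := fun I hI => by
    exact_mod_cast Nat.one_le_iff_ne_zero.2 fun h => hI (Ideal.absNorm_eq_zero_iff.1 h)
  have hSbot : ⊥ ∉ S := fun h => (hS _ h).2.1 rfl
  have hD1 : ∑ p ∈ S, 1 / (Ideal.absNorm p : ℝ) ^ 2 ≤ D := by
    have := hZ (1 + η) (by linarith) (by linarith) S hSbot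
    rw [add_sub_cancel_left] at this
    refine le_trans (Finset.sum_le_sum fun p hp => ?_) this
    have h1 := hNpos p (hS p hp).2.1
    rw [one_div, ← Real.rpow_natCast, ← Real.rpow_neg (by linarith)]
    refine Real.rpow_le_rpow_of_exponent_le h1 ?_
    push_cast
    linarith
  set τ := c / Real.log x with hτ
  have hτ0 : 0 < τ := by positivity
  have hτη : τ ≤ η := by
    rw [hτ, div_le_iff₀ hlx, hc]
    gcongr
  let y : Ideal (𝓞 K) → ℝ := fun p => (Ideal.absNorm p : ℝ) ^ (-(1 + τ))
  have hy0 : ∀ p, 0 ≤ y p := fun p => by positivity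
  -- expanding the product gives a sum over distinct squarefree ideals
  have hprod : ∏ p ∈ S, (1 + y p) ≤ A / c * Real.log x := by
    have h := hZ (1 + τ) (by linarith) (by linarith) (S.powerset.image fun t => ∏ p ∈ t, p) ?_
    · rw [add_sub_cancel_left] at h
      rw [Finset.prod_one_add]
      have e : A / τ = A / c * Real.log x := by
        rw [hτ]; field_simp
      rw [← e]
      refine le_trans (le_of_eq ?_) h
      rw [Finset.sum_image]
      · refine Finset.sum_congr rfl fun t ht => ?_
        rw [map_prod, Nat.cast_prod, ← Real.finsetProd_rpow _ _ (fun _ _ => by positivity)]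
      · -- distinct sets of primes have distinct products
        have key : ∀ t ∈ S.powerset, ∀ p ∈ S, (p ∈ t ↔ p ∣ ∏ q ∈ t, q) := by
          intro t ht p hp
          refine ⟨fun h => Finset.dvd_prod_of_mem _ h, fun h => ?_⟩
          have hpp := Ideal.prime_of_isPrime (hS p hp).2.1 (hS p hp).1
          obtain ⟨q, hq, hpq⟩ := (Prime.dvd_finsetProd_iff hpp _).1 h
          have hqS := Finset.mem_powerset.1 ht hq
          have hqp := Ideal.prime_of_isPrime (hS q hqS).2.1 (hS q hqS).1
          have : p = q := associated_iff_eq.1 ((hpp.dvd_prime_iff_associated hqp).1 hpq)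
          rwa [this]
        intro t ht t' ht' h
        have ht1 := Finset.mem_coe.1 ht
        have ht2 := Finset.mem_coe.1 ht'
        ext p
        constructor
        · intro hp
          have hpS := Finset.mem_powerset.1 ht1 hp
          rw [key t' ht2 p hpS]
          have := (key t ht1 p hpS).1 hp
          simp only at h
          rwa [h] at this
        · intro hp
          have hpS := Finset.mem_powerset.1 ht2 hp
          rw [key t ht1 p hpS]
          have := (key t' ht2 p hpS).1 hp
          simp only at h
          rwa [← h] at this
    · intro h
      obtain ⟨t, ht, h0⟩ := Finset.mem_image.1 h
      obtain ⟨p, hp, hp0⟩ := Finset.prod_eq_zero_iff.1 (h0.trans Ideal.zero_eq_bot.symm)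
      exact (hS p (Finset.mem_powerset.1 ht hp)).2.1 hp0
  -- `exp (y - y ^ 2) ≤ 1 + y` for `y ≥ 0`, from `exp (-u) ≥ 1 - u` and
  -- `(1 + y) * (1 - y + y ^ 2) = 1 + y ^ 3`
  have hexp : Real.exp (∑ p ∈ S, (y p - y p ^ 2)) ≤ A / c * Real.log x := by
    rw [Real.exp_sum]
    refine le_trans (Finset.prod_le_prod (fun _ _ => (Real.exp_pos _).le) fun p hp => ?_) hprod
    have hy := hy0 p
    have h1 : 0 < 1 - y p + y p ^ 2 := by nlinarith [sq_nonneg (y p - 1)]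
    have h2 := Real.add_one_le_exp (-(y p - y p ^ 2))
    rw [Real.exp_neg] at h2
    have h3 : Real.exp (y p - y p ^ 2) * (1 - y p + y p ^ 2) ≤ 1 := by
      have h4 := Real.exp_pos (y p - y p ^ 2)
      calc _ ≤ Real.exp (y p - y p ^ 2) * (Real.exp (y p - y p ^ 2))⁻¹ := by
            gcongr; linarith
        _ = 1 := mul_inv_cancel₀ h4.ne'
    have h5 : 1 ≤ (1 + y p) * (1 - y p + y p ^ 2) := by
      have : 0 ≤ y p ^ 3 := by positivity
      nlinarith
    exact le_of_mul_le_mul_right (h3.trans h5) h1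
  have hcmp : ∀ p ∈ S, 1 / (Ideal.absNorm p : ℝ) ≤
      (y p - y p ^ 2) + 1 / (Ideal.absNorm p : ℝ) ^ 2 +
        τ * (Real.log (Ideal.absNorm p) / Ideal.absNorm p) := by
    intro p hp
    have h1 := hNpos p (hS p hp).2.1
    have h0 : (0 : ℝ) < Ideal.absNorm p := by linarith
    have hyeq : y p = 1 / (Ideal.absNorm p : ℝ) * Real.exp (-(τ * Real.log (Ideal.absNorm p))) := by
      simp only [y]
      rw [neg_add, Real.rpow_add h0, Real.rpow_neg_one, one_div, Real.rpow_def_of_pos h0]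
      congr 2
      ring
    have h2 := Real.add_one_le_exp (-(τ * Real.log (Ideal.absNorm p)))
    have h3 : y p ≤ 1 / (Ideal.absNorm p : ℝ) := by
      rw [hyeq]
      refine mul_le_of_le_one_right (by positivity) (Real.exp_le_one_iff.2 ?_)
      have := Real.log_nonneg h1
      have : 0 ≤ τ * Real.log (Ideal.absNorm p) := by positivity
      linarith
    have h4 : y p ^ 2 ≤ 1 / (Ideal.absNorm p : ℝ) ^ 2 := by
      rw [← one_div_pow]
      exact pow_le_pow_left₀ (hy0 p) h3 2
    have h5 : 1 / (Ideal.absNorm p : ℝ) * (-(τ * Real.log (Ideal.absNorm p)) + 1) ≤ y p := by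
      rw [hyeq]; gcongr
    have h6 : 1 / (Ideal.absNorm p : ℝ) * (-(τ * Real.log (Ideal.absNorm p)) + 1) =
      1 / (Ideal.absNorm p : ℝ) - τ * (Real.log (Ideal.absNorm p) / Ideal.absNorm p) := by ring
    linarith
  have hsum1 := Finset.sum_le_sum hcmp
  rw [Finset.sum_add_distrib, Finset.sum_add_distrib, ← Finset.mul_sum] at hsum1
  have hM1 : τ * ∑ p ∈ S, Real.log (Ideal.absNorm p) / Ideal.absNorm p ≤ c * A' := by
    have := mul_le_mul_of_nonneg_left (hM x S hS) hτ0.le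
    refine this.trans (le_of_eq ?_)
    rw [hτ]; field_simp
  have htot : ∑ p ∈ S, (6 / (Ideal.absNorm p : ℝ) + 40 / (Ideal.absNorm p : ℝ) ^ 2) ≤
      6 * (∑ p ∈ S, (y p - y p ^ 2)) + (6 * (D + c * A') + 40 * D) := by
    have e : ∑ p ∈ S, (6 / (Ideal.absNorm p : ℝ) + 40 / (Ideal.absNorm p : ℝ) ^ 2) =
        6 * ∑ p ∈ S, 1 / (Ideal.absNorm p : ℝ) + 40 * ∑ p ∈ S, 1 / (Ideal.absNorm p : ℝ) ^ 2 := by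
      rw [Finset.mul_sum, Finset.mul_sum, ← Finset.sum_add_distrib]
      exact Finset.sum_congr rfl fun p _ => by ring
    rw [e]
    linarith
  calc _ ≤ Real.exp (6 * (∑ p ∈ S, (y p - y p ^ 2)) + (6 * (D + c * A') + 40 * D)) :=
        Real.exp_le_exp.2 htot
    _ = Real.exp (∑ p ∈ S, (y p - y p ^ 2)) ^ 6 * Real.exp (6 * (D + c * A') + 40 * D) := by
        rw [Real.exp_add, ← Real.exp_nat_mul]; norm_num
    _ ≤ (A / c * Real.log x) ^ 6 * Real.exp (6 * (D + c * A') + 40 * D) := by gcongr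
    _ = _ := by ring

/-! ### Sums over cosets and one distortion step -/

/-- Against an `H`-invariant function `φ`, any `ψ` may be replaced by its averages over cosets. -/
theorem sum_mul_card_eq {G : Type*} [AddCommGroup G] [Fintype G] (H : AddSubgroup G)
    (φ ψ : G → ℝ) (hφ : ∀ x, ∀ h ∈ H, φ (x + h) = φ x) :
    ((Finset.univ.filter fun h => h ∈ H).card : ℝ) * ∑ x, φ x * ψ x =
      ∑ x, φ x * ∑ h with h ∈ H, ψ (x + h) := by
  simp_rw [Finset.mul_sum]
  rw [Finset.sum_comm, ← Finset.mul_sum, ← nsmul_eq_mul, ← Finset.sum_const]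
  refine Finset.sum_congr rfl fun h hh => ?_
  rw [← Equiv.sum_comp (Equiv.addRight h)]
  refine Finset.sum_congr rfl fun x _ => ?_
  simp only [Equiv.coe_addRight]
  rw [hφ x h (Finset.mem_filter.1 hh).2]

/-- A coset of `H` meets a coset of `A` in at most `|H ⊓ A|` points, and in none if they lie in
different cosets of a common overgroup. -/
theorem card_coset_inter_le {G : Type*} [AddCommGroup G] [Fintype G] (H A A' : AddSubgroup G)
    (hH : H ≤ A') (hA : A ≤ A') (x b : G) :
    ((Finset.univ.filter fun h => h ∈ H).filter fun h => x + h - b ∈ A).card ≤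
      if x - b ∈ A' then (Finset.univ.filter fun h => h ∈ H ⊓ A).card else 0 := by
  rcases Finset.eq_empty_or_nonempty
    ((Finset.univ.filter fun h => h ∈ H).filter fun h => x + h - b ∈ A) with h | ⟨h0, h⟩
  · rw [h]; simp
  · simp only [Finset.mem_filter, Finset.mem_univ, true_and] at h
    have hx : x - b ∈ A' := by
      have := A'.sub_mem (hA h.2) (hH h.1)
      convert this using 1
      abel
    rw [if_pos hx]
    refine Finset.card_le_card_of_injOn (fun u => u - h0) ?_ ?_
    · intro u hu
      simp only [Finset.coe_filter, Finset.mem_filter, Finset.mem_univ, true_and,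
        Set.mem_ofPred_eq] at hu ⊢
      refine ⟨H.sub_mem hu.1 h.1, ?_⟩
      have := A.sub_mem hu.2 h.2
      rw [show u - h0 = x + u - b - (x + h0 - b) by abel]
      exact this
    · intro u _ v _ huv
      exact sub_left_injective huv

/-- For an `H`-invariant mass, passing from a coset of the overgroup to one of `A` gains the factor
`|H ⊓ A| / |H|`. -/
theorem sum_coset_le {G : Type*} [AddCommGroup G] [Fintype G] (H A A' : AddSubgroup G)
    (hH : H ≤ A') (hA : A ≤ A') (φ : G → ℝ) (hφ0 : ∀ x, 0 ≤ φ x)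
    (hφ : ∀ x, ∀ h ∈ H, φ (x + h) = φ x) (b : G) :
    ((Finset.univ.filter fun h => h ∈ H).card : ℝ) * ∑ x with x - b ∈ A, φ x ≤
      ((Finset.univ.filter fun h => h ∈ H ⊓ A).card : ℝ) * ∑ x with x - b ∈ A', φ x := by
  have h := sum_mul_card_eq H φ (fun x => if x - b ∈ A then 1 else 0) hφ
  simp only [mul_ite, mul_one, mul_zero] at h
  rw [← Finset.sum_filter] at h
  rw [h, Finset.sum_filter, Finset.mul_sum]
  refine Finset.sum_le_sum fun x _ => ?_
  rw [← Finset.sum_filter, Finset.sum_const, nsmul_eq_mul, mul_one]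
  have h1 := card_coset_inter_le H A A' hH hA x b
  split_ifs at h1 ⊢ with hx
  · rw [mul_comm]
    exact mul_le_mul_of_nonneg_right (by exact_mod_cast h1) (hφ0 x)
  · rw [Nat.le_zero.1 h1]; simp

theorem card_fiber_eq {G : Type*} [AddCommGroup G] [Fintype G] (H : AddSubgroup G) (x : G) :
    (Finset.univ.filter fun x' => x' - x ∈ H).card = (Finset.univ.filter fun h => h ∈ H).card := by
  refine Finset.card_bij' (fun u _ => u - x) (fun u _ => u + x) ?_ ?_ ?_ ?_ <;> simp

theorem card_fiber_inter_eq {G : Type*} [AddCommGroup G] [Fintype G] (H : AddSubgroup G)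
    (B : Finset G) (x : G) :
    ((Finset.univ.filter fun x' => x' - x ∈ H) ∩ B).card =
      ((Finset.univ.filter fun h => h ∈ H).filter fun h => x + h ∈ B).card := by
  refine Finset.card_bij' (fun u _ => u - x) (fun u _ => x + u) ?_ ?_ ?_ ?_ <;>
    simp +contextual

/-- One step of the distortion process, for cosets of a subgroup `H`: the new weights are
nonnegative, at most double the old ones, still constant on cosets of a smaller subgroup `H'`
under which `B` is stable, and give the same mass to every union of cosets of `H`. -/
theorem distortion_step {G : Type*} [AddCommGroup G] [Fintype G] (H H' : AddSubgroup G)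
    (hH' : H' ≤ H) (B : Finset G) (hB : ∀ x, ∀ h ∈ H', (x + h ∈ B ↔ x ∈ B))
    (α : G → ℝ) (hα : ∀ x, α x = (((Finset.univ.filter fun x' => x' - x ∈ H) ∩ B).card : ℝ) /
      ((Finset.univ.filter fun x' => x' - x ∈ H).card : ℝ))
    (δ : ℝ) (hδ : δ ∈ Set.Icc (0 : ℝ) (1 / 2)) (P P' : G → ℝ) (hP0 : ∀ x, 0 ≤ P x)
    (hP : ∀ x, ∀ h ∈ H, P (x + h) = P x)
    (hP' : ∀ x, P' x = if α x < δ then (if x ∈ B then 0 else P x / (1 - α x))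
            else if α x = 0 then P x
            else P x * (α x - (if x ∈ B then δ else 0)) / (α x * (1 - δ))) :
    (∀ x, 0 ≤ P' x) ∧ (∀ x, P' x ≤ 2 * P x) ∧ (∀ x, ∀ h ∈ H', P' (x + h) = P' x) ∧
      ∀ g : G → ℝ, (∀ x, ∀ h ∈ H, g (x + h) = g x) → ∑ x, g x * P' x = ∑ x, g x * P x := by
  obtain ⟨hδ0, hδ1⟩ := hδ
  have hα0 : ∀ x, 0 ≤ α x := fun x => by rw [hα]; positivity
  have hαinv : ∀ x, ∀ h ∈ H, α (x + h) = α x := by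
    intro x h hh
    have : (Finset.univ.filter fun x' => x' - (x + h) ∈ H) =
        (Finset.univ.filter fun x' => x' - x ∈ H) := by
      ext u
      simp only [Finset.mem_filter, Finset.mem_univ, true_and]
      rw [← sub_sub]
      exact ⟨fun hu => by simpa using H.add_mem hu hh, fun hu => H.sub_mem hu hh⟩
    rw [hα, hα, this]
  have hHpos : (0 : ℝ) < (Finset.univ.filter fun h => h ∈ H).card := by
    have : 0 < (Finset.univ.filter fun h => h ∈ H).card :=
      Finset.card_pos.2 ⟨0, by simp⟩
    exact_mod_cast this
  have hαsum : ∀ x, (∑ h with h ∈ H, if x + h ∈ B then (1 : ℝ) else 0) =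
      ((Finset.univ.filter fun h => h ∈ H).card : ℝ) * α x := by
    intro x
    rw [hα, card_fiber_eq, card_fiber_inter_eq, ← Finset.sum_filter]
    rw [mul_div_cancel₀ _ hHpos.ne']
    simp
  -- integrating an `H`-invariant function against the indicator of `B` or against `α`
  -- gives the same result
  have havg : ∀ φ : G → ℝ, (∀ x, ∀ h ∈ H, φ (x + h) = φ x) →
      ∑ x, φ x * (if x ∈ B then (1 : ℝ) else 0) = ∑ x, φ x * α x := by
    intro φ hφ
    have := sum_mul_card_eq H φ (fun x => if x ∈ B then (1 : ℝ) else 0) hφ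
    simp only [hαsum] at this
    refine mul_left_cancel₀ hHpos.ne' (this.trans ?_)
    rw [Finset.mul_sum]
    exact Finset.sum_congr rfl fun x _ => by ring
  refine ⟨fun x => ?_, fun x => ?_, fun x h hh => ?_, fun g hg => ?_⟩
  · rw [hP']
    have := hP0 x
    have := hα0 x
    split_ifs with h1 h2 h3 h4
    · exact le_rfl
    · exact div_nonneg (hP0 x) (by linarith)
    · exact hP0 x
    · exact div_nonneg (mul_nonneg (hP0 x) (by linarith)) (mul_nonneg (hα0 x) (by linarith))
    · exact div_nonneg (mul_nonneg (hP0 x) (by linarith)) (mul_nonneg (hα0 x) (by linarith))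
  · rw [hP']
    have p0 := hP0 x
    have a0 := hα0 x
    split_ifs with h1 h2 h3 h4
    · linarith
    · rw [div_le_iff₀ (by linarith)]
      nlinarith
    · linarith
    · have a1 : 0 < α x := lt_of_le_of_ne a0 (Ne.symm h3)
      rw [div_le_iff₀ (mul_pos a1 (by linarith))]
      have : 0 ≤ P x * α x := by positivity
      have : 0 ≤ P x * δ := by positivity
      nlinarith
    · have a1 : 0 < α x := lt_of_le_of_ne a0 (Ne.symm h3)
      rw [div_le_iff₀ (mul_pos a1 (by linarith))]
      have : 0 ≤ P x * α x := by positivity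
      nlinarith
  · rw [hP', hP', hαinv x h (hH' hh), hP x h (hH' hh)]
    simp only [hB x h hh]
  -- the new weight is the affine combination `P * u + P * v * 1_B` with `H`-invariant `u`, `v` such that
  -- `u + v * α = 1`
  · let u : G → ℝ := fun x => if α x < δ then 1 / (1 - α x) else if α x = 0 then 1
      else 1 / (1 - δ)
    let v : G → ℝ := fun x => if α x < δ then -(1 / (1 - α x)) else if α x = 0 then 0
      else -(δ / (α x * (1 - δ)))
    have huv : ∀ x, P' x = P x * u x + P x * v x * (if x ∈ B then 1 else 0) := by
      intro x
      rw [hP']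
      simp only [u, v]
      split_ifs with h1 h2 h3 h4
      · ring
      · ring
      · ring
      · ring
      · have : 1 - δ ≠ 0 := by linarith
        field_simp
        ring
      · have : 1 - δ ≠ 0 := by linarith
        field_simp
        ring
    have huv1 : ∀ x, u x + v x * α x = 1 := by
      intro x
      simp only [u, v]
      split_ifs with h1 h2
      · have : 1 - α x ≠ 0 := by linarith
        field_simp
        ring
      · ring
      · have : 1 - δ ≠ 0 := by linarith
        field_simp
        ring
    calc ∑ x, g x * P' x = ∑ x, g x * (P x * u x) +
          ∑ x, (g x * (P x * v x)) * (if x ∈ B then 1 else 0) := by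
          rw [← Finset.sum_add_distrib]
          exact Finset.sum_congr rfl fun x _ => by rw [huv]; ring
      _ = ∑ x, g x * (P x * u x) + ∑ x, (g x * (P x * v x)) * α x := by
          rw [havg]
          intro x h hh
          simp only [v]
          rw [hg x h hh, hP x h hh, hαinv x h hh]
      _ = ∑ x, g x * P x := by
          rw [← Finset.sum_add_distrib]
          exact Finset.sum_congr rfl fun x _ => by linear_combination g x * P x * huv1 x

/-! ### Local factors -/

theorem sum_sum_max {g : ℕ → ℝ} (n : ℕ) :
    ∑ t ∈ Finset.range (n + 1), ∑ t' ∈ Finset.range (n + 1), g (max t t') =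
      ∑ t ∈ Finset.range (n + 1), (2 * t + 1) * g t := by
  induction n with
  | zero => simp
  | succ n ih =>
    have h1 : ∀ t ∈ Finset.range (n + 1), ∑ t' ∈ Finset.range (n + 1 + 1), g (max t t') =
        ∑ t' ∈ Finset.range (n + 1), g (max t t') + g (n + 1) := by
      intro t ht
      rw [Finset.sum_range_succ _ (n + 1), max_eq_right (Finset.mem_range.1 ht).le]
    have h2 : ∀ t' ∈ Finset.range (n + 1 + 1), g (max (n + 1) t') = g (n + 1) := by
      intro t ht
      rw [max_eq_left (Nat.lt_succ_iff.1 (Finset.mem_range.1 ht))]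
    rw [Finset.sum_range_succ _ (n + 1), Finset.sum_congr rfl h1, Finset.sum_congr rfl h2,
      Finset.sum_add_distrib, ih,
      Finset.sum_range_succ (fun t : ℕ => (2 * (t : ℝ) + 1) * g t) (n + 1)]
    simp only [Finset.sum_const, Finset.card_range, nsmul_eq_mul]
    push_cast
    ring

/-- The local factor at a prime of norm `N` smaller than the current one. -/
theorem local_factor_le (N : ℝ) (hN : 2 ≤ N) (ν : ℕ) :
    ∑ t ∈ Finset.range (ν + 1), ∑ t' ∈ Finset.range (ν + 1),
      (if max t t' = 0 then 1 else 2 / N ^ (max t t')) ≤ Real.exp (6 / N + 40 / N ^ 2) := by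
  rw [sum_sum_max (g := fun t => if t = 0 then 1 else 2 / N ^ t)]
  have hN0 : 0 < N := by linarith
  obtain ⟨q, hq⟩ : ∃ q, q = N⁻¹ := ⟨_, rfl⟩
  have hq0 : 0 < q := by rw [hq]; positivity
  have hq1 : q ≤ 1 / 2 := by
    rw [hq, one_div]; exact inv_anti₀ (by norm_num) hN
  have hq2 : 1 - q ≠ 0 := by linarith
  -- closed form of the partial sums of `∑ (2 t + 1) q ^ t`
  have key : ∀ n : ℕ, ∑ t ∈ Finset.range (n + 1),
      (2 * (t : ℝ) + 1) * (if t = 0 then 1 else 2 / N ^ t) =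
      1 + 2 * ((3 * q - q ^ 2) - q ^ (n + 1) * ((2 * n + 3) - (2 * n + 1) * q)) / (1 - q) ^ 2 := by
    intro n
    induction n with
    | zero =>
      simp only [zero_add, Finset.range_one, Finset.sum_singleton, Nat.cast_zero, if_true]
      ring
    | succ n ih =>
      rw [Finset.sum_range_succ, ih, if_neg (Nat.succ_ne_zero n)]
      have : 2 / N ^ (n + 1) = 2 * q ^ (n + 1) := by rw [hq, inv_pow]; rfl
      rw [this]
      field_simp
      push_cast
      ring
  rw [key]
  have h1 : 2 * ((3 * q - q ^ 2) - q ^ (ν + 1) * ((2 * ν + 3) - (2 * ν + 1) * q)) / (1 - q) ^ 2 ≤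
      6 * q + 40 * q ^ 2 := by
    rw [div_le_iff₀ (by positivity)]
    have h2 : 0 ≤ q ^ (ν + 1) * ((2 * ν + 3) - (2 * ν + 1) * q) := by
      refine mul_nonneg (by positivity) ?_
      have : (0 : ℝ) ≤ ν := by positivity
      nlinarith
    have h3 : 0 ≤ q ^ 2 * ((1 / 2 - q) * (60 - 40 * q)) := by
      refine mul_nonneg (by positivity) (mul_nonneg (by linarith) (by linarith))
    have h4 : 0 ≤ q ^ 3 := by positivity
    nlinarith
  have h5 : 6 / N + 40 / N ^ 2 = 6 * q + 40 * q ^ 2 := by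
    rw [hq]; field_simp
  rw [h5]
  linarith [Real.add_one_le_exp (6 * q + 40 * q ^ 2)]

/-- The local factor at the current prime, where both exponents are positive. -/
theorem top_factor_le (N : ℝ) (hN : 2 ≤ N) (ν : ℕ) :
    ∑ t ∈ Finset.range (ν + 1), ∑ t' ∈ Finset.range (ν + 1),
      ((if t = 0 then 0 else 1 / N ^ t) * (if t' = 0 then 0 else 1 / N ^ t')) ≤ 4 / N ^ 2 := by
  rw [← Finset.sum_mul_sum]
  have hN0 : 0 < N := by linarith
  have key : ∀ n : ℕ, ∑ t ∈ Finset.range (n + 1), (if t = 0 then (0 : ℝ) else 1 / N ^ t) ≤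
      2 / N - 2 / N ^ (n + 1) := by
    intro n
    induction n with
    | zero => simp
    | succ n ih =>
      rw [Finset.sum_range_succ, if_neg (Nat.succ_ne_zero n)]
      have : 2 * (1 / N ^ (n + 1 + 1)) ≤ 1 / N ^ (n + 1) := by
        rw [pow_succ, ← div_div, ← mul_div_assoc, div_le_iff₀ hN0]
        have : 0 < 1 / N ^ (n + 1) := by positivity
        nlinarith
      have e1 : 2 / N ^ (n + 1 + 1) = 2 * (1 / N ^ (n + 1 + 1)) := by ring
      have e2 : 2 / N ^ (n + 1) = 2 * (1 / N ^ (n + 1)) := by ring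
      linarith
  have h1 : ∑ t ∈ Finset.range (ν + 1), (if t = 0 then (0 : ℝ) else 1 / N ^ t) ≤ 2 / N := by
    have : (0 : ℝ) < 2 / N ^ (ν + 1) := by positivity
    linarith [key ν]
  have h0 : 0 ≤ ∑ t ∈ Finset.range (ν + 1), (if t = 0 then (0 : ℝ) else 1 / N ^ t) :=
    Finset.sum_nonneg fun t _ => by split_ifs <;> positivity
  calc _ ≤ 2 / N * (2 / N) := mul_le_mul h1 h1 h0 (by positivity)
    _ = _ := by ring

/-! ### Exponent vectors and images of ideals -/

theorem sum_comp_le_mul_sum {ι β : Type*} [DecidableEq β] (S : Finset ι) (r : ι → β)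
    (T : Finset β) (s : ℕ)
    (hr : ∀ i ∈ S, r i ∈ T) (hs : ∀ h ∈ T, (S.filter fun i => r i = h).card ≤ s)
    (φ : β → ℝ) (hφ : ∀ h, 0 ≤ φ h) : ∑ i ∈ S, φ (r i) ≤ s * ∑ h ∈ T, φ h := by
  rw [← Finset.sum_fiberwise_of_maps_to hr, Finset.mul_sum]
  refine Finset.sum_le_sum fun h hh => ?_
  have : ∑ i ∈ S with r i = h, φ (r i) = ∑ i ∈ S with r i = h, φ h :=
    Finset.sum_congr rfl fun i hi => by rw [(Finset.mem_filter.1 hi).2]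
  rw [this, Finset.sum_const, nsmul_eq_mul]
  exact mul_le_mul_of_nonneg_right (by exact_mod_cast hs h hh) (hφ h)

/-- A double sum over pairs of indices is bounded by an Euler product over `U`, when every
exponent vector on `U` is attained by at most `s` indices. -/
theorem sum_sum_prod_le {ι : Type*} (S : Finset ι) (U : Finset ℕ) (F : ι → ℕ → ℕ) (ν : ℕ → ℕ)
    (s : ℕ) (hF : ∀ i ∈ S, ∀ k ∈ U, F i k ≤ ν k)
    (hs : ∀ h : ℕ → ℕ, (S.filter fun i => ∀ k ∈ U, F i k = h k).card ≤ s)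
    (w : ℕ → ℕ → ℕ → ℝ) (hw : ∀ k t t', 0 ≤ w k t t') :
    ∑ i ∈ S, ∑ i' ∈ S, ∏ k ∈ U, w k (F i k) (F i' k) ≤
      (s : ℝ) ^ 2 * ∏ k ∈ U, ∑ t ∈ Finset.range (ν k + 1), ∑ t' ∈ Finset.range (ν k + 1),
        w k t t' := by
  let T : Finset (U → ℕ) := Fintype.piFinset fun k : U => Finset.range (ν k + 1)
  let r : ι → U → ℕ := fun i k => F i k
  have hr : ∀ i ∈ S, r i ∈ T := by
    intro i hi
    refine Fintype.mem_piFinset.2 fun k => Finset.mem_range.2 (Nat.lt_succ_of_le (hF i hi k k.2))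
  have hs' : ∀ h ∈ T, (S.filter fun i => r i = h).card ≤ s := by
    intro h _
    refine le_trans (Finset.card_le_card ?_) (hs fun k => if hk : k ∈ U then h ⟨k, hk⟩ else 0)
    intro i hi
    obtain ⟨h1, h2⟩ := Finset.mem_filter.1 hi
    refine Finset.mem_filter.2 ⟨h1, fun k hk => ?_⟩
    rw [dif_pos hk, ← h2]
  have hprod : ∀ i i', ∏ k ∈ U, w k (F i k) (F i' k) = ∏ k : U, w k (r i k) (r i' k) := by
    intro i i'
    rw [Finset.prod_coe_sort U (fun k => w k (F i k) (F i' k))]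
  simp_rw [hprod]
  have h1 : ∀ i ∈ S, ∑ i' ∈ S, ∏ k : U, w k (r i k) (r i' k) ≤
      s * ∑ h' ∈ T, ∏ k : U, w k (r i k) (h' k) := fun i _ =>
    sum_comp_le_mul_sum S r T s hr hs' (fun h' => ∏ k : U, w k (r i k) (h' k))
      fun h' => Finset.prod_nonneg fun k _ => hw _ _ _
  refine (Finset.sum_le_sum h1).trans ?_
  rw [← Finset.mul_sum]
  have h2 := sum_comp_le_mul_sum S r T s hr hs' (fun h => ∑ h' ∈ T, ∏ k : U, w k (h k) (h' k))
      fun h => Finset.sum_nonneg fun h' _ => Finset.prod_nonneg fun k _ => hw _ _ _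
  have h3 : ∑ h ∈ T, ∑ h' ∈ T, ∏ k : U, w k (h k) (h' k) =
      ∏ k ∈ U, ∑ t ∈ Finset.range (ν k + 1), ∑ t' ∈ Finset.range (ν k + 1), w k t t' := by
    rw [← Finset.prod_coe_sort U
      (fun k => ∑ t ∈ Finset.range (ν k + 1), ∑ t' ∈ Finset.range (ν k + 1), w k t t')]
    rw [Finset.prod_univ_sum]
    refine Finset.sum_congr rfl fun h _ => ?_
    rw [Finset.prod_univ_sum]
  rw [h3] at h2
  calc _ ≤ (s : ℝ) * (s * _) := mul_le_mul_of_nonneg_left h2 (by positivity)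
    _ = _ := by ring

theorem exists_exponents {R : Type*} [CommRing R] [IsDedekindDomain R] (p : ℕ → Ideal R)
    (ν : ℕ → ℕ) (s : Finset ℕ) (hp : ∀ k ∈ s, Prime (p k)) (I : Ideal R)
    (hI : I ∣ ∏ k ∈ s, p k ^ ν k) :
    ∃ f : ℕ → ℕ, (∀ k ∈ s, f k ≤ ν k) ∧ I = ∏ k ∈ s, p k ^ f k := by
  induction s using Finset.induction_on generalizing I with
  | empty => exact ⟨fun _ => 0, by simp, by
      rw [Finset.prod_empty] at hI ⊢
      exact associated_iff_eq.1 (associated_one_iff_isUnit.2 (isUnit_of_dvd_one hI))⟩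
  | insert a s ha ih =>
    rw [Finset.prod_insert ha] at hI
    obtain ⟨I1, I2, h1, h2, rfl⟩ := exists_dvd_and_dvd_of_dvd_mul hI
    obtain ⟨f, hf, rfl⟩ := ih (fun k hk => hp k (Finset.mem_insert_of_mem hk)) I2 h2
    obtain ⟨e, he, hI1⟩ := (dvd_prime_pow (hp a (Finset.mem_insert_self _ _)) _).1 h1
    have hI1 := associated_iff_eq.1 hI1
    refine ⟨fun k => if k = a then e else f k, ?_, ?_⟩
    · intro k hk
      dsimp only
      split_ifs with h
      · rwa [h]
      · exact hf k ((Finset.mem_insert.1 hk).resolve_left h)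
    · rw [Finset.prod_insert ha]
      dsimp only
      rw [if_pos rfl, hI1]
      congr 1
      refine Finset.prod_congr rfl fun k hk => ?_
      rw [if_neg (fun h : k = a => ha (h ▸ hk))]

theorem prod_inf_prod_le {R : Type*} [CommRing R] [IsDedekindDomain R] (p : ℕ → Ideal R)
    (s : Finset ℕ) (hp : ∀ k ∈ s, ∀ l ∈ s, k ≠ l → IsCoprime (p k) (p l)) (f g : ℕ → ℕ) :
    (∏ k ∈ s, p k ^ f k) ⊓ (∏ k ∈ s, p k ^ g k) ≤ ∏ k ∈ s, p k ^ max (f k) (g k) := by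
  rw [Ideal.prod_eq_iInf_of_pairwise_isCoprime (J := fun k => p k ^ max (f k) (g k))
    (fun k hk l hl hkl => (hp k hk l hl hkl).pow)]
  refine le_iInf₂ fun k hk => ?_
  rcases le_total (f k) (g k) with h | h
  · rw [max_eq_right h]
    exact inf_le_right.trans (Ideal.dvd_iff_le.1 (Finset.dvd_prod_of_mem (fun k => p k ^ g k) hk))
  · rw [max_eq_left h]
    exact inf_le_left.trans (Ideal.dvd_iff_le.1 (Finset.dvd_prod_of_mem (fun k => p k ^ f k) hk))

/-- The image in `R ⧸ Q` of an ideal `I` of `R`, as an additive subgroup. -/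
def imageSubgroup {R : Type*} [CommRing R] (Q I : Ideal R) : AddSubgroup (R ⧸ Q) :=
  (I.map (Ideal.Quotient.mk Q)).toAddSubgroup

theorem mem_imageSubgroup {R : Type*} [CommRing R] {Q I : Ideal R} {x : R ⧸ Q} :
    x ∈ imageSubgroup Q I ↔ x ∈ I.map (Ideal.Quotient.mk Q) := Iff.rfl

theorem imageSubgroup_mono {R : Type*} [CommRing R] {Q I I' : Ideal R} (h : I ≤ I') :
    imageSubgroup Q I ≤ imageSubgroup Q I' := fun _ hx => Ideal.map_mono h hx

theorem imageSubgroup_inf {R : Type*} [CommRing R] {Q I I' : Ideal R} (h : Q ≤ I) (h' : Q ≤ I') :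
    imageSubgroup Q I ⊓ imageSubgroup Q I' = imageSubgroup Q (I ⊓ I') := by
  ext x
  obtain ⟨u, rfl⟩ := Ideal.Quotient.mk_surjective x
  rw [AddSubgroup.mem_inf, mem_imageSubgroup, mem_imageSubgroup, mem_imageSubgroup,
    Ideal.mem_quotient_iff_mem h, Ideal.mem_quotient_iff_mem h',
    Ideal.mem_quotient_iff_mem (le_inf h h')]
  rfl

theorem card_imageSubgroup_mul {K : Type*} [Field K] [NumberField K] {Q I : Ideal (𝓞 K)}
    [Fintype (𝓞 K ⧸ Q)] (h : Q ≤ I) :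
    (Finset.univ.filter fun x => x ∈ imageSubgroup Q I).card * Ideal.absNorm I =
      Fintype.card (𝓞 K ⧸ Q) := by
  have h1 : (Finset.univ.filter fun x => x ∈ imageSubgroup Q I).card =
      Nat.card (imageSubgroup Q I) := by
    rw [Nat.card_eq_fintype_card, Fintype.card_subtype]
  have h2 : Ideal.absNorm I = (imageSubgroup Q I).index := by
    have e := (DoubleQuot.quotQuotEquivQuotOfLE h).toEquiv
    have := Nat.card_congr e
    rw [Ideal.absNorm_apply, Submodule.cardQuot_apply]
    exact this.symm
  rw [h1, h2, AddSubgroup.card_mul_index, Nat.card_eq_fintype_card]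

/-- The second ideal occupies at most the proportion `1 / N(q)` of `I` modulo `Q`, when its
intersection with `I` lies in `I * q`. -/
theorem card_inf_imageSubgroup_mul_le {K : Type*} [Field K] [NumberField K]
    {Q I I' q : Ideal (𝓞 K)} [Fintype (𝓞 K ⧸ Q)] (h : Q ≤ I) (h' : Q ≤ I') (hq : I ⊓ I' ≤ I * q) :
    (Finset.univ.filter fun x => x ∈ imageSubgroup Q I ⊓ imageSubgroup Q I').card *
      Ideal.absNorm q ≤ (Finset.univ.filter fun x => x ∈ imageSubgroup Q I).card := by
  rw [imageSubgroup_inf h h']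
  have h1 := card_imageSubgroup_mul h
  have h2 := card_imageSubgroup_mul (le_inf h h')
  have hpos : 0 < Fintype.card (𝓞 K ⧸ Q) := Fintype.card_pos
  have hN : 0 < Ideal.absNorm I := Nat.pos_of_ne_zero fun h0 => by
    rw [h0] at h1; omega
  have hN' : 0 < Ideal.absNorm (I ⊓ I') := Nat.pos_of_ne_zero fun h0 => by
    rw [h0] at h2; omega
  have h3 : Ideal.absNorm I * Ideal.absNorm q ≤ Ideal.absNorm (I ⊓ I') := by
    rw [← map_mul]
    exact Nat.le_of_dvd hN' (Ideal.absNorm_dvd_absNorm_of_le hq)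
  refine Nat.le_of_mul_le_mul_right ?_ hN
  rw [h1, ← h2, mul_assoc, mul_comm (Ideal.absNorm q)]
  exact Nat.mul_le_mul_left _ h3

/-! ### The second moment -/

/-- The factor contributed by a prime of norm `N` with exponent `t` in the modulus to the bound for
the distorted measure of a congruence class. -/
noncomputable def massWeight (N : ℝ) (t : ℕ) : ℝ := if t = 0 then 1 else 2 / N ^ t

theorem massWeight_nonneg {N : ℝ} (hN : 0 ≤ N) (t : ℕ) : 0 ≤ massWeight N t := by
  unfold massWeight
  split_ifs <;> positivity

/-- Second moment bound. -/
theorem second_moment_bound (K : Type*) [Field K] [NumberField K] :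
    ∃ C : ℝ, 0 < C ∧
      ∀ (n : ℕ) (hn : 0 < n)
        (a : Fin n → 𝓞 K) (Idl : Fin n → Ideal (𝓞 K))
        (hdist : ∀ i : Fin n, Distinguishable (Idl i))
        (hmono : ∀ i j : Fin n, i ≤ j → Ideal.absNorm (Idl i) ≤ Ideal.absNorm (Idl j))
        (s : ℕ)
        (hsle : ∀ I₀ : Ideal (𝓞 K), (Finset.univ.filter fun i : Fin n => Idl i = I₀).card ≤ s)
        (hseq : ∃ I₀ : Ideal (𝓞 K), (Finset.univ.filter fun i : Fin n => Idl i = I₀).card = s)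
        (Q : Ideal (𝓞 K)) (hQ : Q = ⨅ i : Fin n, Idl i)
        (J : ℕ) (p : ℕ → Ideal (𝓞 K)) (ν : ℕ → ℕ)
        (hp : ∀ j ∈ Finset.Icc 1 J, (p j).IsPrime)
        (hν : ∀ j ∈ Finset.Icc 1 J, 1 ≤ ν j)
        (hpinj : ∀ j ∈ Finset.Icc 1 J, ∀ j' ∈ Finset.Icc 1 J, p j = p j' → j = j')
        (hfact : Q = ∏ j ∈ Finset.Icc 1 J, p j ^ ν j)
        (hpmono : ∀ j ∈ Finset.Icc 1 J, ∀ j' ∈ Finset.Icc 1 J, j ≤ j' →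
          Ideal.absNorm (p j) ≤ Ideal.absNorm (p j'))
        (Qp : ℕ → Ideal (𝓞 K)) (hQp : ∀ j : ℕ, Qp j = ∏ i ∈ Finset.Icc 1 j, p i ^ ν i)
        [Fintype (𝓞 K ⧸ Q)]
        (B : ℕ → Finset (𝓞 K ⧸ Q))
        (hB : ∀ j ∈ Finset.Icc 1 J, B j = Finset.univ.filter fun x : 𝓞 K ⧸ Q =>
          ∃ i : Fin n, IsPmin (Idl i) (p j) ∧
            x - Ideal.Quotient.mk Q (a i) ∈ (Idl i).map (Ideal.Quotient.mk Q))
        (F : ℕ → (𝓞 K ⧸ Q) → Finset (𝓞 K ⧸ Q))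
        (hF : ∀ (j : ℕ) (x : 𝓞 K ⧸ Q),
          F j x = Finset.univ.filter fun x' : 𝓞 K ⧸ Q =>
            x' - x ∈ (Qp j).map (Ideal.Quotient.mk Q))
        (α : ℕ → (𝓞 K ⧸ Q) → ℝ)
        (hα : ∀ j ∈ Finset.Icc 1 J, ∀ x : 𝓞 K ⧸ Q,
          α j x = ((F (j - 1) x ∩ B j).card : ℝ) / ((F (j - 1) x).card : ℝ))
        (δ : ℕ → ℝ) (hδ : ∀ j ∈ Finset.Icc 1 J, δ j ∈ Set.Icc (0 : ℝ) (1 / 2))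
        (P : ℕ → (𝓞 K ⧸ Q) → ℝ)
        (hP0 : ∀ x : 𝓞 K ⧸ Q, P 0 x = 1 / (Fintype.card (𝓞 K ⧸ Q) : ℝ))
        (hPrec : ∀ j ∈ Finset.Icc 1 J, ∀ x : 𝓞 K ⧸ Q,
          P j x = if α j x < δ j then (if x ∈ B j then 0 else P (j - 1) x / (1 - α j x))
            else if α j x = 0 then P (j - 1) x
            else P (j - 1) x * (α j x - (if x ∈ B j then δ j else 0)) / (α j x * (1 - δ j))),
        ∀ j ∈ Finset.Icc 1 J,
          ∑ x : 𝓞 K ⧸ Q, (α j x) ^ 2 * P (j - 1) x ≤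
            C * (s : ℝ) ^ 2 * (Real.log (Ideal.absNorm (p j))) ^ 6 /
              (Ideal.absNorm (p j) : ℝ) ^ 2 := by
  obtain ⟨C, hC, hmert⟩ := exists_exp_sum_primes_le K
  refine ⟨4 * C, by positivity, ?_⟩
  intro n hn a Idl hdist hmono s hsle hseq Q hQ J p ν hp hν hpinj hfact hpmono Qp hQp _ B hB F hF
    α hα δ hδ P hP0 hPrec j hj
  obtain ⟨hj1, hjJ⟩ := Finset.mem_Icc.1 hj
  -- `𝓞 K ⧸ Q` is finite
  have hQ0 : Q ≠ ⊥ := by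
    rintro rfl
    have h1 : Finite (𝓞 K ⧸ (⊥ : Ideal (𝓞 K))) := inferInstance
    rw [← Ideal.absNorm_ne_zero_iff] at h1
    exact h1 Ideal.absNorm_bot
  have hp0 : ∀ k ∈ Finset.Icc 1 J, p k ≠ ⊥ := by
    intro k hk h0
    refine hQ0 (hfact.trans (Finset.prod_eq_zero hk ?_))
    rw [h0]
    exact zero_pow (Nat.one_le_iff_ne_zero.1 (hν k hk))
  have hpp : ∀ k ∈ Finset.Icc 1 J, Prime (p k) := fun k hk =>
    Ideal.prime_of_isPrime (hp0 k hk) (hp k hk)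
  have hcop : ∀ k ∈ Finset.Icc 1 J, ∀ l ∈ Finset.Icc 1 J, k ≠ l → IsCoprime (p k) (p l) := by
    intro k hk l hl hkl
    have h1 := (hp k hk).isMaximal (hp0 k hk)
    have h2 := (hp l hl).isMaximal (hp0 l hl)
    exact Ideal.isCoprime_of_isMaximal fun h => hkl (hpinj k hk l hl h)
  have hN2 : ∀ k ∈ Finset.Icc 1 J, 2 ≤ Ideal.absNorm (p k) := by
    intro k hk
    have h0 : Ideal.absNorm (p k) ≠ 0 := fun h => hp0 k hk (Ideal.absNorm_eq_zero_iff.1 h)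
    have h1 : Ideal.absNorm (p k) ≠ 1 := fun h =>
      (hp k hk).ne_top (Ideal.absNorm_eq_one_iff.1 h)
    omega
  have hN0 : ∀ k ∈ Finset.Icc 1 J, (0 : ℝ) < Ideal.absNorm (p k) := by
    intro k hk
    have := hN2 k hk
    exact_mod_cast (by omega : 0 < Ideal.absNorm (p k))
  have hsub : ∀ l ≤ J, Finset.Icc 1 l ⊆ Finset.Icc 1 J := fun l hl =>
    Finset.Icc_subset_Icc_right hl
  let D : ℕ → (ℕ → ℕ) → Ideal (𝓞 K) := fun l f => ∏ k ∈ Finset.Icc 1 l, p k ^ f k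
  have hDsucc : ∀ l f, D (l + 1) f = D l f * p (l + 1) ^ f (l + 1) := fun l f =>
    Finset.prod_Icc_succ_top (by omega) _
  have hQpD : ∀ l, Qp l = D l ν := hQp
  have hDdvd : ∀ l f, (∀ k ∈ Finset.Icc 1 l, f k ≤ ν k) → Qp l ≤ D l f := by
    intro l f hf
    rw [hQpD]
    exact Ideal.dvd_iff_le.1 (Finset.prod_dvd_prod_of_dvd _ _ fun k hk => pow_dvd_pow _ (hf k hk))
  have hQQp : ∀ l ≤ J, Q ≤ Qp l := by
    intro l hl
    rw [hfact, hQpD]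
    exact Ideal.dvd_iff_le.1 (Finset.prod_dvd_prod_of_subset _ _ _ (hsub l hl))
  have hQpanti : ∀ l, Qp (l + 1) ≤ Qp l := by
    intro l
    rw [hQpD, hQpD, hDsucc]
    exact Ideal.mul_le_left
  -- `Q_l` and the next prime are coprime
  have hQpinf : ∀ l, l + 1 ≤ J → ∀ e, Qp l ⊓ p (l + 1) ^ e ≤ Qp l * p (l + 1) ^ e := by
    intro l hl e
    refine (Ideal.mul_eq_inf_of_isCoprime ?_).ge
    rw [hQpD]
    refine IsCoprime.prod_left fun k hk => IsCoprime.pow ?_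
    obtain ⟨hk1, hk2⟩ := Finset.mem_Icc.1 hk
    exact hcop k (Finset.mem_Icc.2 ⟨hk1, by omega⟩) (l + 1) (Finset.mem_Icc.2 ⟨by omega, hl⟩)
      (by omega)
  -- the proportion of a fibre of `π_l` lying in a class modulo `∏ p_k ^ f_k`, `k ≤ l + 1`
  have hcardratio : ∀ l, l + 1 ≤ J → ∀ f, (∀ k ∈ Finset.Icc 1 (l + 1), f k ≤ ν k) →
      ((Finset.univ.filter fun x => x ∈ imageSubgroup Q (Qp l) ⊓
          imageSubgroup Q (D (l + 1) f)).card : ℝ) ≤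
        ((Finset.univ.filter fun x => x ∈ imageSubgroup Q (Qp l)).card : ℝ) *
          (1 / (Ideal.absNorm (p (l + 1)) : ℝ) ^ f (l + 1)) := by
    intro l hl f hf
    have h1 := card_inf_imageSubgroup_mul_le (hQQp l (by omega))
      ((hQQp (l + 1) hl).trans (hDdvd (l + 1) f hf)) (q := p (l + 1) ^ f (l + 1)) ?_
    · rw [map_pow] at h1
      have := hN0 (l + 1) (Finset.mem_Icc.2 ⟨by omega, hl⟩)
      rw [mul_one_div, le_div_iff₀ (by positivity)]
      exact_mod_cast h1
    · refine le_trans (inf_le_inf_left _ ?_) (hQpinf l hl _)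
      rw [hDsucc]
      exact Ideal.mul_le_right
  -- exponents of the moduli whose largest prime is `p_l`
  have hex : ∀ l ∈ Finset.Icc 1 J, ∀ i, IsPmin (Idl i) (p l) →
      ∃ f : ℕ → ℕ, (∀ k ∈ Finset.Icc 1 l, f k ≤ ν k) ∧ f l ≠ 0 ∧ Idl i = D l f := by
    intro l hl i hi
    obtain ⟨hl1, hlJ⟩ := Finset.mem_Icc.1 hl
    have hdvd : Idl i ∣ ∏ k ∈ Finset.Icc 1 J, p k ^ ν k := by
      rw [← hfact, hQ]
      exact Ideal.dvd_iff_le.2 (iInf_le _ i)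
    obtain ⟨f, hf, hIf⟩ := exists_exponents p ν _ hpp _ hdvd
    have hz : ∀ k ∈ Finset.Icc 1 J, k ∉ Finset.Icc 1 l → f k = 0 := by
      intro k hk hkl
      by_contra h0
      have hkl' : l < k := by
        rw [Finset.mem_Icc] at hk hkl
        omega
      have hd : p k ∣ Idl i := by
        rw [hIf]
        exact (dvd_pow_self _ h0).trans (Finset.dvd_prod_of_mem (fun k => p k ^ f k) hk)
      have h1 := hi.2.2 (p k) (hp k hk) hd fun h => hkl'.ne' (hpinj k hk l hl h)
      have h2 := hpmono l hl k hk hkl'.le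
      omega
    have hID : Idl i = D l f := by
      rw [hIf]
      symm
      refine Finset.prod_subset (hsub l hlJ) fun k hk hkl => ?_
      rw [hz k hk hkl, pow_zero]
    refine ⟨f, fun k hk => hf k (hsub l hlJ hk), fun h0 => ?_, hID⟩
    have hd := hi.2.1
    rw [hID] at hd
    obtain ⟨k, hk, hd⟩ := (Prime.dvd_finsetProd_iff (hpp l hl) _).1 hd
    have hkJ := hsub l hlJ hk
    have hd1 := (hpp l hl).dvd_of_dvd_pow hd
    have hlk := hpinj l hl k hkJ
      (associated_iff_eq.1 (((hpp l hl).dvd_prime_iff_associated (hpp k hkJ)).1 hd1))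
    rw [← hlk, h0, pow_zero] at hd
    exact (hpp l hl).not_isUnit (isUnit_of_dvd_one hd)
  have hstep : ∀ l, l + 1 ≤ J → (∀ x, 0 ≤ P l x) →
      (∀ x, ∀ h ∈ imageSubgroup Q (Qp l), P l (x + h) = P l x) →
      (∀ x, 0 ≤ P (l + 1) x) ∧ (∀ x, P (l + 1) x ≤ 2 * P l x) ∧
      (∀ x, ∀ h ∈ imageSubgroup Q (Qp (l + 1)), P (l + 1) (x + h) = P (l + 1) x) ∧
      ∀ g : 𝓞 K ⧸ Q → ℝ, (∀ x, ∀ h ∈ imageSubgroup Q (Qp l), g (x + h) = g x) →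
        ∑ x, g x * P (l + 1) x = ∑ x, g x * P l x := by
    intro l hl h0 hinv
    have hlm : l + 1 ∈ Finset.Icc 1 J := Finset.mem_Icc.2 ⟨by omega, hl⟩
    refine distortion_step (imageSubgroup Q (Qp l)) (imageSubgroup Q (Qp (l + 1)))
      (imageSubgroup_mono (hQpanti l)) (B (l + 1)) ?_ (α (l + 1)) ?_ (δ (l + 1)) (hδ _ hlm)
      (P l) (P (l + 1)) h0 hinv (hPrec (l + 1) hlm)
    · intro x h hh
      rw [hB _ hlm]
      simp only [Finset.mem_filter, Finset.mem_univ, true_and]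
      refine exists_congr fun i => and_congr_right fun hi => ?_
      obtain ⟨f, hf, -, hIf⟩ := hex _ hlm i hi
      have hle : Qp (l + 1) ≤ Idl i := by
        rw [hIf]; exact hDdvd _ f hf
      have hh' : h ∈ (Idl i).map (Ideal.Quotient.mk Q) := imageSubgroup_mono hle hh
      rw [add_sub_right_comm]
      exact Ideal.add_mem_iff_left _ hh'
    · intro x
      rw [hα _ hlm, Nat.add_sub_cancel, hF]
      rfl
  have hPfacts : ∀ l ≤ J, (∀ x, 0 ≤ P l x) ∧
      (∀ x, ∀ h ∈ imageSubgroup Q (Qp l), P l (x + h) = P l x) := by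
    intro l
    induction l with
    | zero =>
      intro _
      refine ⟨fun x => ?_, fun x h _ => ?_⟩
      · rw [hP0]; positivity
      · rw [hP0, hP0]
    | succ l ih =>
      intro hl
      obtain ⟨h1, h2⟩ := ih (by omega)
      obtain ⟨h3, -, h4, -⟩ := hstep l hl h1 h2
      exact ⟨h3, h4⟩
  -- the distorted mass of a congruence class: a vanishing exponent at `p_{l+1}` costs nothing, since
  -- the class is then a union of fibres of `π_l`; a positive one costs the factor `2` of the
  -- distortion and gains the proportion in `hcardratio`
  have hPbound : ∀ l ≤ J, ∀ f : ℕ → ℕ, (∀ k ∈ Finset.Icc 1 l, f k ≤ ν k) → ∀ b : 𝓞 K ⧸ Q,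
      ∑ x with x - b ∈ imageSubgroup Q (D l f), P l x ≤
        ∏ k ∈ Finset.Icc 1 l, massWeight (Ideal.absNorm (p k)) (f k) := by
    intro l
    induction l with
    | zero =>
      intro _ f _ b
      have h1 : ∑ x with x - b ∈ imageSubgroup Q (D 0 f), P 0 x ≤ ∑ x, P 0 x :=
        Finset.sum_le_sum_of_subset_of_nonneg (Finset.filter_subset _ _) fun x _ _ =>
          (hPfacts 0 (Nat.zero_le _)).1 x
      refine h1.trans (le_of_eq ?_)
      simp only [hP0, Finset.sum_const, Finset.card_univ, nsmul_eq_mul]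
      simp
    | succ l ih =>
      intro hl f hf b
      have hlm : l + 1 ∈ Finset.Icc 1 J := Finset.mem_Icc.2 ⟨by omega, hl⟩
      have hf' : ∀ k ∈ Finset.Icc 1 l, f k ≤ ν k := fun k hk =>
        hf k (Finset.Icc_subset_Icc_right (by omega) hk)
      obtain ⟨h1, h2⟩ := hPfacts l (by omega)
      obtain ⟨h3, h4, -, h5⟩ := hstep l hl h1 h2
      have hI := ih (by omega) f hf' b
      rw [Finset.prod_Icc_succ_top (by omega)]
      by_cases h0 : f (l + 1) = 0
      · have hD : D (l + 1) f = D l f := by rw [hDsucc, h0, pow_zero, mul_one]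
        have h6 := h5 (fun x => if x - b ∈ imageSubgroup Q (D l f) then 1 else 0) ?_
        · simp only [ite_mul, one_mul, zero_mul] at h6
          rw [← Finset.sum_filter, ← Finset.sum_filter] at h6
          rw [hD, h6, massWeight, if_pos h0, mul_one]
          exact hI
        · intro x h hh
          have hh' := imageSubgroup_mono (hDdvd l f hf') hh
          have : x + h - b ∈ imageSubgroup Q (D l f) ↔ x - b ∈ imageSubgroup Q (D l f) := by
            rw [add_sub_right_comm]
            exact AddSubgroup.add_mem_cancel_right _ hh'
          simp only [this]
      · rw [massWeight, if_neg h0]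
        have h6 := sum_coset_le (imageSubgroup Q (Qp l)) (imageSubgroup Q (D (l + 1) f))
          (imageSubgroup Q (D l f)) (imageSubgroup_mono (hDdvd l f hf'))
          (imageSubgroup_mono (by rw [hDsucc]; exact Ideal.mul_le_left)) (P l) h1 h2 b
        have h7 := hcardratio l hl f hf
        have hNl := hN0 _ hlm
        set c := ((Finset.univ.filter fun x => x ∈ imageSubgroup Q (Qp l)).card : ℝ) with hc
        have hc0 : 0 < c := by
          have : 0 < (Finset.univ.filter fun x => x ∈ imageSubgroup Q (Qp l)).card :=
            Finset.card_pos.2 ⟨0, by simp⟩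
          rw [hc]
          exact_mod_cast this
        have hnn : 0 ≤ ∑ x with x - b ∈ imageSubgroup Q (D l f), P l x :=
          Finset.sum_nonneg fun x _ => h1 x
        have h8 : ∑ x with x - b ∈ imageSubgroup Q (D (l + 1) f), P l x ≤
            (1 / (Ideal.absNorm (p (l + 1)) : ℝ) ^ f (l + 1)) *
              ∑ x with x - b ∈ imageSubgroup Q (D l f), P l x := by
          refine le_of_mul_le_mul_left (h6.trans ?_) hc0
          rw [← mul_assoc]
          exact mul_le_mul_of_nonneg_right h7 hnn
        calc ∑ x with x - b ∈ imageSubgroup Q (D (l + 1) f), P (l + 1) x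
            ≤ ∑ x with x - b ∈ imageSubgroup Q (D (l + 1) f), 2 * P l x :=
              Finset.sum_le_sum fun x _ => h4 x
          _ = 2 * ∑ x with x - b ∈ imageSubgroup Q (D (l + 1) f), P l x := by
              rw [Finset.mul_sum]
          _ ≤ 2 * ((1 / (Ideal.absNorm (p (l + 1)) : ℝ) ^ f (l + 1)) *
              ∏ k ∈ Finset.Icc 1 l, massWeight (Ideal.absNorm (p k)) (f k)) := by
              refine mul_le_mul_of_nonneg_left (h8.trans ?_) (by norm_num)
              exact mul_le_mul_of_nonneg_left hI (by positivity)
          _ = _ := by ring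
  obtain ⟨l, rfl⟩ : ∃ l, j = l + 1 := ⟨j - 1, by omega⟩
  rw [Nat.add_sub_cancel]
  obtain ⟨hPl0, hPlinv⟩ := hPfacts l (by omega)
  let S : Finset (Fin n) := Finset.univ.filter fun i => IsPmin (Idl i) (p (l + 1))
  have hex' : ∀ i, ∃ f : ℕ → ℕ, i ∈ S →
      (∀ k ∈ Finset.Icc 1 (l + 1), f k ≤ ν k) ∧ f (l + 1) ≠ 0 ∧ Idl i = D (l + 1) f := by
    intro i
    by_cases hi : i ∈ S
    · obtain ⟨f, hf⟩ := hex (l + 1) hj i (Finset.mem_filter.1 hi).2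
      exact ⟨f, fun _ => hf⟩
    · exact ⟨0, fun h => absurd h hi⟩
  choose f hf using hex'
  have hf' : ∀ i ∈ S, ∀ k ∈ Finset.Icc 1 l, f i k ≤ ν k := fun i hi k hk =>
    (hf i hi).1 k (Finset.Icc_subset_Icc_right (by omega) hk)
  set N : ℝ := ((Ideal.absNorm (p (l + 1)) : ℕ) : ℝ) with hN
  have hNpos : 0 < N := hN0 _ hj
  let v : ℕ → ℝ := fun t => if t = 0 then 0 else 1 / N ^ t
  have hv0 : ∀ t, 0 ≤ v t := fun t => by
    simp only [v]; split_ifs <;> positivity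
  have hαle : ∀ x, α (l + 1) x ≤ ∑ i ∈ S,
      if x - Ideal.Quotient.mk Q (a i) ∈ imageSubgroup Q (D l (f i)) then v (f i (l + 1))
        else 0 := by
    intro x
    have e : F l x = Finset.univ.filter fun x' => x' - x ∈ imageSubgroup Q (Qp l) := by
      rw [hF]; rfl
    rw [hα _ hj, Nat.add_sub_cancel, e, card_fiber_eq, card_fiber_inter_eq]
    set c := (Finset.univ.filter fun x => x ∈ imageSubgroup Q (Qp l)).card with hc
    have hc0 : (0 : ℝ) < c := by
      have : 0 < c := Finset.card_pos.2 ⟨0, by simp⟩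
      exact_mod_cast this
    rw [div_le_iff₀ hc0, Finset.sum_mul]
    have hun : ((Finset.univ.filter fun h => h ∈ imageSubgroup Q (Qp l)).filter
        fun h => x + h ∈ B (l + 1)) ⊆ S.biUnion fun i =>
          (Finset.univ.filter fun h => h ∈ imageSubgroup Q (Qp l)).filter
            fun h => x + h - Ideal.Quotient.mk Q (a i) ∈ imageSubgroup Q (D (l + 1) (f i)) := by
      intro h hh
      obtain ⟨hh1, hh2⟩ := Finset.mem_filter.1 hh
      rw [hB _ hj] at hh2
      obtain ⟨i, hi, hi2⟩ := (Finset.mem_filter.1 hh2).2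
      have hiS : i ∈ S := Finset.mem_filter.2 ⟨Finset.mem_univ _, hi⟩
      refine Finset.mem_biUnion.2 ⟨i, hiS, Finset.mem_filter.2 ⟨hh1, ?_⟩⟩
      rw [← (hf i hiS).2.2]
      exact hi2
    have h1 := (Finset.card_le_card hun).trans Finset.card_biUnion_le
    refine le_trans (by exact_mod_cast h1) (?_ : ((∑ i ∈ S, _ : ℕ) : ℝ) ≤ _)
    rw [Nat.cast_sum]
    refine Finset.sum_le_sum fun i hi => ?_
    have h2 := card_coset_inter_le (imageSubgroup Q (Qp l)) (imageSubgroup Q (D (l + 1) (f i)))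
      (imageSubgroup Q (D l (f i))) (imageSubgroup_mono (hDdvd l (f i) (hf' i hi)))
      (imageSubgroup_mono (by rw [hDsucc]; exact Ideal.mul_le_left)) x (Ideal.Quotient.mk Q (a i))
    split_ifs at h2 ⊢ with hx
    · have h3 := hcardratio l hjJ (f i) (hf i hi).1
      simp only [v, if_neg (hf i hi).2.1]
      rw [mul_comm]
      exact le_trans (by exact_mod_cast h2) h3
    · rw [Nat.le_zero.1 h2]; simp
  have hα0 : ∀ x, 0 ≤ α (l + 1) x := fun x => by rw [hα _ hj]; positivity
  -- the mass of the intersection of two congruence classes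
  have hpair : ∀ i ∈ S, ∀ i' ∈ S,
      ∑ x, (if x - Ideal.Quotient.mk Q (a i) ∈ imageSubgroup Q (D l (f i)) then (1 : ℝ) else 0) *
        (if x - Ideal.Quotient.mk Q (a i') ∈ imageSubgroup Q (D l (f i')) then (1 : ℝ) else 0) *
          P l x ≤
      ∏ k ∈ Finset.Icc 1 l, massWeight (Ideal.absNorm (p k)) (max (f i k) (f i' k)) := by
    intro i hi i' hi'
    have hrhs : 0 ≤ ∏ k ∈ Finset.Icc 1 l,
        massWeight (Ideal.absNorm (p k)) (max (f i k) (f i' k)) :=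
      Finset.prod_nonneg fun k _ => massWeight_nonneg (by positivity) _
    by_cases hne : ∃ x0, x0 - Ideal.Quotient.mk Q (a i) ∈ imageSubgroup Q (D l (f i)) ∧
      x0 - Ideal.Quotient.mk Q (a i') ∈ imageSubgroup Q (D l (f i'))
    · obtain ⟨x0, hx1, hx2⟩ := hne
      refine le_trans ?_ (hPbound l (by omega) (fun k => max (f i k) (f i' k))
        (fun k hk => max_le (hf' i hi k hk) (hf' i' hi' k hk)) x0)
      rw [Finset.sum_filter]
      refine Finset.sum_le_sum fun x _ => ?_
      by_cases hb : x - Ideal.Quotient.mk Q (a i) ∈ imageSubgroup Q (D l (f i)) ∧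
        x - Ideal.Quotient.mk Q (a i') ∈ imageSubgroup Q (D l (f i'))
      · rw [if_pos hb.1, if_pos hb.2, if_pos, one_mul, one_mul]
        refine imageSubgroup_mono (prod_inf_prod_le p (Finset.Icc 1 l) (fun k hk m hm =>
          hcop k (hsub l (by omega) hk) m (hsub l (by omega) hm)) (f i) (f i')) ?_
        rw [← imageSubgroup_inf ((hQQp l (by omega)).trans (hDdvd l _ (hf' i hi)))
          ((hQQp l (by omega)).trans (hDdvd l _ (hf' i' hi')))]
        refine ⟨?_, ?_⟩
        · have := AddSubgroup.sub_mem _ hb.1 hx1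
          rwa [sub_sub_sub_cancel_right] at this
        · have := AddSubgroup.sub_mem _ hb.2 hx2
          rwa [sub_sub_sub_cancel_right] at this
      · have : (if x - Ideal.Quotient.mk Q (a i) ∈ imageSubgroup Q (D l (f i)) then (1 : ℝ)
            else 0) * (if x - Ideal.Quotient.mk Q (a i') ∈ imageSubgroup Q (D l (f i'))
            then (1 : ℝ) else 0) = 0 := by
          rw [not_and_or] at hb
          rcases hb with hb | hb <;> simp [hb]
        rw [this, zero_mul]
        split_ifs
        · exact hPl0 x
        · exact le_rfl
    · refine le_trans (le_of_eq (Finset.sum_eq_zero fun x _ => ?_)) hrhs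
      have hb : ¬ (x - Ideal.Quotient.mk Q (a i) ∈ imageSubgroup Q (D l (f i)) ∧
        x - Ideal.Quotient.mk Q (a i') ∈ imageSubgroup Q (D l (f i'))) := fun h => hne ⟨x, h⟩
      rw [not_and_or] at hb
      rcases hb with hb | hb <;> simp [hb]
  -- the local weights of the pair sum: both exponents at `p_{l+1}` are positive, through `v`
  let w : ℕ → ℕ → ℕ → ℝ := fun k t t' => if k = l + 1 then v t * v t' else
    massWeight (Ideal.absNorm (p k)) (max t t')
  have hw0 : ∀ k t t', 0 ≤ w k t t' := by
    intro k t t'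
    simp only [w]
    split_ifs
    · exact mul_nonneg (hv0 _) (hv0 _)
    · exact massWeight_nonneg (by positivity) _
  have hwprod : ∀ g g' : ℕ → ℕ, ∏ k ∈ Finset.Icc 1 (l + 1), w k (g k) (g' k) =
      (∏ k ∈ Finset.Icc 1 l, massWeight (Ideal.absNorm (p k)) (max (g k) (g' k))) *
        (v (g (l + 1)) * v (g' (l + 1))) := by
    intro g g'
    rw [Finset.prod_Icc_succ_top (by omega)]
    simp only [w, if_true]
    congr 1
    refine Finset.prod_congr rfl fun k hk => ?_
    rw [if_neg]
    have := (Finset.mem_Icc.1 hk).2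
    omega
  have hM : ∑ x, α (l + 1) x ^ 2 * P l x ≤
      ∑ i ∈ S, ∑ i' ∈ S, ∏ k ∈ Finset.Icc 1 (l + 1), w k (f i k) (f i' k) := by
    have h1 : ∀ x, α (l + 1) x ^ 2 * P l x ≤ ∑ i ∈ S, ∑ i' ∈ S,
        (v (f i (l + 1)) * v (f i' (l + 1))) *
        ((if x - Ideal.Quotient.mk Q (a i) ∈ imageSubgroup Q (D l (f i)) then (1 : ℝ) else 0) *
        (if x - Ideal.Quotient.mk Q (a i') ∈ imageSubgroup Q (D l (f i')) then (1 : ℝ) else 0) *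
          P l x) := by
      intro x
      have h2 := mul_le_mul_of_nonneg_right (pow_le_pow_left₀ (hα0 x) (hαle x) 2) (hPl0 x)
      refine h2.trans (le_of_eq ?_)
      rw [sq, Finset.sum_mul_sum, Finset.sum_mul]
      refine Finset.sum_congr rfl fun i _ => ?_
      rw [Finset.sum_mul]
      refine Finset.sum_congr rfl fun i' _ => ?_
      split_ifs <;> ring
    refine (Finset.sum_le_sum fun x _ => h1 x).trans ?_
    rw [Finset.sum_comm]
    refine Finset.sum_le_sum fun i hi => ?_
    rw [Finset.sum_comm]
    refine Finset.sum_le_sum fun i' hi' => ?_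
    rw [← Finset.mul_sum, hwprod, mul_comm]
    exact mul_le_mul_of_nonneg_right (hpair i hi i' hi') (mul_nonneg (hv0 _) (hv0 _))
  have hcomb := sum_sum_prod_le S (Finset.Icc 1 (l + 1)) f ν s (fun i hi => (hf i hi).1) (by
    intro h
    refine le_trans (Finset.card_le_card ?_) (hsle (D (l + 1) h))
    intro i hi
    obtain ⟨hi1, hi2⟩ := Finset.mem_filter.1 hi
    refine Finset.mem_filter.2 ⟨Finset.mem_univ _, ?_⟩
    rw [(hf i hi1).2.2]
    exact Finset.prod_congr rfl fun k hk => by rw [hi2 k hk]) w hw0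
  have hprodle : ∏ k ∈ Finset.Icc 1 (l + 1), ∑ t ∈ Finset.range (ν k + 1),
      ∑ t' ∈ Finset.range (ν k + 1), w k t t' ≤ C * Real.log N ^ 6 * (4 / N ^ 2) := by
    rw [Finset.prod_Icc_succ_top (by omega)]
    have hNk : ∀ k ∈ Finset.Icc 1 J, (2 : ℝ) ≤ Ideal.absNorm (p k) := fun k hk => by
      exact_mod_cast hN2 k hk
    refine mul_le_mul ?_ ?_ ?_ (mul_nonneg hC.le (pow_nonneg (Real.log_natCast_nonneg _) 6))
    · have h1 : ∀ k ∈ Finset.Icc 1 l, ∑ t ∈ Finset.range (ν k + 1),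
          ∑ t' ∈ Finset.range (ν k + 1), w k t t' ≤
          Real.exp (6 / (Ideal.absNorm (p k) : ℝ) + 40 / (Ideal.absNorm (p k) : ℝ) ^ 2) := by
        intro k hk
        have hk' : k ≠ l + 1 := by
          have := (Finset.mem_Icc.1 hk).2
          omega
        simp only [w, if_neg hk', massWeight]
        exact local_factor_le _ (hNk k (hsub l (by omega) hk)) _
      refine (Finset.prod_le_prod (fun k _ => Finset.sum_nonneg fun t _ =>
        Finset.sum_nonneg fun t' _ => hw0 _ _ _) h1).trans ?_
      rw [← Real.exp_sum]
      have h2 := hmert (Ideal.absNorm (p (l + 1))) ((Finset.Icc 1 l).image p) (hN2 _ hj) ?_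
      · rw [Finset.sum_image] at h2
        · exact h2
        · intro k hk m hm hkm
          exact hpinj k (hsub l (by omega) hk) m (hsub l (by omega) hm) hkm
      · intro q hq
        obtain ⟨k, hk, rfl⟩ := Finset.mem_image.1 hq
        have hkJ := hsub l (by omega) hk
        refine ⟨hp k hkJ, hp0 k hkJ, hpmono k hkJ _ hj ?_⟩
        have := (Finset.mem_Icc.1 hk).2
        omega
    · simp only [w, if_true]
      exact top_factor_le N (hNk _ hj) _
    · exact Finset.sum_nonneg fun t _ => Finset.sum_nonneg fun t' _ => hw0 _ _ _
  calc _ ≤ _ := hM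
    _ ≤ _ := hcomb
    _ ≤ (s : ℝ) ^ 2 * (C * Real.log N ^ 6 * (4 / N ^ 2)) :=
        mul_le_mul_of_nonneg_left hprodle (by positivity)
    _ = _ := by ring
end

section
/- Let K be a number field with ring of integers O_K. For all real numbers x ≥ 1 and y ≥ 2, Σ_I 1/N(I) ≤ x^{−1/2} · ∏_{𝔭 : N(𝔭) ≤ y} (1 − N(𝔭)^{−1/2})^{−1}, where the (convergent) sum is over all nonzero ideals I of O_K with N(I) ≥ x all of whose prime ideal factors 𝔭 satisfy N(𝔭) ≤ y, and the (finite) product is over all prime ideals 𝔭 of O_K with N(𝔭) ≤ y. -/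
set_option maxHeartbeats 1000000
set_option synthInstance.maxHeartbeats 1000000

open scoped Classical
open NumberField

/-!
Rankin's trick. If `N(I) ≥ x`, then `1 / N(I) ≤ x ^ (-1/2) * N(I) ^ (-1/2)`, so it suffices to bound
`∑ N(I) ^ (-1/2)` over an arbitrary finite set of nonzero ideals with prime factors of norm at most
`y` (all terms are nonnegative, so bounding finite partial sums bounds the series). By unique
factorization such an ideal is determined by its tuple of exponents, and `N(I) ^ (-1/2)` is the
product of the `(N(𝔭) ^ (-1/2)) ^ e_𝔭`; the finite sum is therefore part of the expansion of a
product of truncated geometric series (`sum_le_prod_geometric`), which is at most the Euler product.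

In the stated product the zero ideal is among the primes of norm at most `y`; since
`0 ^ (-1/2) = 0` by convention, it contributes the factor `1`.
-/

open UniqueFactorizationMonoid in
/-- A finite piece of the Euler product inequality: for a nonnegative multiplicative `f` with
`f q < 1` on the finite set `S`, the sum of `f` over finitely many nonzero ideals whose prime
factors lie in `S` is at most `∏ q ∈ S, (1 - f q)⁻¹`. -/
lemma sum_le_prod_geometric {R : Type*} [CommRing R] [IsDedekindDomain R]
    (f : Ideal R →* ℝ) (S : Finset (Ideal R))
    (hf0 : ∀ q ∈ S, 0 ≤ f q) (hf1 : ∀ q ∈ S, f q < 1) (s : Finset (Ideal R))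
    (hs : ∀ I ∈ s, I ≠ ⊥ ∧ ∀ q ∈ normalizedFactors I, q ∈ S) :
    ∑ I ∈ s, f I ≤ ∏ q ∈ S, (1 - f q)⁻¹ := by
  -- `M` exceeds every exponent occurring in the factorization of a member of `s`.
  set M := s.sup (fun I => (normalizedFactors I).card) + 1 with hM
  let e : Ideal R → (S → ℕ) := fun I q => (normalizedFactors I).count q.1
  have hfe : ∀ I ∈ s, f I = ∏ q : S, f q.1 ^ e I q := by
    intro I hI
    obtain ⟨h0, hq⟩ := hs I hI
    have h0' : I ≠ 0 := h0
    conv_lhs => rw [← Ideal.prod_normalizedFactors_eq_self h0', map_multiset_prod,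
      Finset.prod_multiset_map_count]
    rw [Finset.prod_coe_sort S (fun q => f q ^ (normalizedFactors I).count q)]
    apply Finset.prod_subset
    · intro q h
      exact hq q (Multiset.mem_toFinset.1 h)
    · intro q _ h
      rw [Multiset.mem_toFinset] at h
      rw [Multiset.count_eq_zero_of_notMem h, pow_zero]
  have hinj : Set.InjOn e s := by
    intro I hI J hJ h
    obtain ⟨hI0, hIq⟩ := hs I hI
    obtain ⟨hJ0, hJq⟩ := hs J hJ
    have hI0' : I ≠ 0 := hI0
    have hJ0' : J ≠ 0 := hJ0
    rw [← Ideal.prod_normalizedFactors_eq_self hI0', ← Ideal.prod_normalizedFactors_eq_self hJ0']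
    congr 1
    ext q
    by_cases hq : q ∈ S
    · exact congrFun h ⟨q, hq⟩
    · rw [Multiset.count_eq_zero_of_notMem (fun h => hq (hIq q h)),
        Multiset.count_eq_zero_of_notMem (fun h => hq (hJq q h))]
  calc ∑ I ∈ s, f I = ∑ I ∈ s, ∏ q : S, f q.1 ^ e I q := Finset.sum_congr rfl hfe
    _ = ∑ p ∈ s.image e, ∏ q : S, f q.1 ^ p q :=
        (Finset.sum_image (f := fun p : S → ℕ => ∏ q : S, f q.1 ^ p q) hinj).symm
    _ ≤ ∑ p ∈ Fintype.piFinset (fun _ : S => Finset.range M), ∏ q : S, f q.1 ^ p q := by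
        apply Finset.sum_le_sum_of_subset_of_nonneg
        · intro p hp
          obtain ⟨I, hI, rfl⟩ := Finset.mem_image.1 hp
          rw [Fintype.mem_piFinset]
          intro q
          rw [Finset.mem_range, hM, Nat.lt_succ_iff]
          exact (Multiset.count_le_card _ _).trans
            (Finset.le_sup (f := fun I => (normalizedFactors I).card) hI)
        · intro p _ _
          exact Finset.prod_nonneg fun q _ => pow_nonneg (hf0 q.1 q.2) _
    _ = ∏ q : S, ∑ k ∈ Finset.range M, f q.1 ^ k :=
        (Finset.prod_univ_sum (fun _ : S => Finset.range M) (fun q k => f q.1 ^ k)).symm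
    _ ≤ ∏ q : S, (1 - f q.1)⁻¹ := by
        apply Finset.prod_le_prod
        · intro q _
          exact Finset.sum_nonneg fun k _ => pow_nonneg (hf0 q.1 q.2) _
        · intro q _
          rw [← tsum_geometric_of_lt_one (hf0 q.1 q.2) (hf1 q.1 q.2)]
          exact (summable_geometric_of_lt_one (hf0 q.1 q.2) (hf1 q.1 q.2)).sum_le_tsum _
            fun k _ => pow_nonneg (hf0 q.1 q.2) _
    _ = ∏ q ∈ S, (1 - f q)⁻¹ := Finset.prod_coe_sort S (fun q => (1 - f q)⁻¹)

/-- The completely multiplicative function `I ↦ N(I) ^ (-1/2)`, with value `0` at the zero ideal. -/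
noncomputable def normInvSqrt (K : Type*) [Field K] [NumberField K] : Ideal (𝓞 K) →* ℝ where
  toFun I := (Ideal.absNorm I : ℝ) ^ (-(1 : ℝ) / 2)
  map_one' := by simp
  map_mul' I J := by
    rw [map_mul, Nat.cast_mul, Real.mul_rpow (Nat.cast_nonneg _) (Nat.cast_nonneg _)]

/-- Rankin's trick for ideals of a number field. -/
theorem rankin_bound_smooth_ideals (K : Type*) [Field K] [NumberField K]
    (x y : ℝ) (hx : 1 ≤ x) (hy : 2 ≤ y)
    (PS : Finset (Ideal (𝓞 K)))
    (hPS : ∀ q : Ideal (𝓞 K), q ∈ PS ↔ q.IsPrime ∧ (Ideal.absNorm q : ℝ) ≤ y) :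
    (∑' I : Ideal (𝓞 K),
        (if I ≠ ⊥ ∧ x ≤ (Ideal.absNorm I : ℝ) ∧
            (∀ q : Ideal (𝓞 K), q.IsPrime → q ∣ I → (Ideal.absNorm q : ℝ) ≤ y)
         then 1 / (Ideal.absNorm I : ℝ) else 0)) ≤
      x ^ (-(1 : ℝ) / 2) * ∏ q ∈ PS, (1 - (Ideal.absNorm q : ℝ) ^ (-(1 : ℝ) / 2))⁻¹ := by
  have hx0 : 0 < x := by linarith
  apply Real.tsum_le_of_sum_le
  · intro I
    dsimp only [Pi.zero_apply]
    split_ifs <;> positivity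
  intro s
  rw [← Finset.sum_filter]
  have hf0 : ∀ q ∈ PS, 0 ≤ normInvSqrt K q := fun q _ =>
    Real.rpow_nonneg (Nat.cast_nonneg _) _
  have hf1 : ∀ q ∈ PS, normInvSqrt K q < 1 := by
    intro q hq
    change (Ideal.absNorm q : ℝ) ^ (-(1 : ℝ) / 2) < 1
    have h1 : Ideal.absNorm q ≠ 1 := fun h =>
      ((hPS q).1 hq).1.ne_top (Ideal.absNorm_eq_one_iff.1 h)
    rcases Nat.eq_zero_or_pos (Ideal.absNorm q) with h | h
    · rw [h, Nat.cast_zero, Real.zero_rpow (by norm_num)]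
      norm_num
    · apply Real.rpow_lt_one_of_one_lt_of_neg
      · exact_mod_cast (by omega : 1 < Ideal.absNorm q)
      · norm_num
  refine le_trans ?_ (mul_le_mul_of_nonneg_left
    (sum_le_prod_geometric (normInvSqrt K) PS hf0 hf1 (s.filter fun I => I ≠ ⊥ ∧
      x ≤ (Ideal.absNorm I : ℝ) ∧
      ∀ q : Ideal (𝓞 K), q.IsPrime → q ∣ I → (Ideal.absNorm q : ℝ) ≤ y) ?_)
    (Real.rpow_nonneg hx0.le (-(1 : ℝ) / 2)))
  · rw [Finset.mul_sum]
    apply Finset.sum_le_sum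
    intro I hI
    obtain ⟨-, -, hxI, -⟩ := Finset.mem_filter.1 hI
    have hN : 0 < (Ideal.absNorm I : ℝ) := by linarith
    calc 1 / (Ideal.absNorm I : ℝ)
        = (Ideal.absNorm I : ℝ) ^ (-(1 : ℝ) / 2) * (Ideal.absNorm I : ℝ) ^ (-(1 : ℝ) / 2) := by
          rw [← Real.rpow_add hN, one_div, ← Real.rpow_neg_one]
          norm_num
      _ ≤ x ^ (-(1 : ℝ) / 2) * (Ideal.absNorm I : ℝ) ^ (-(1 : ℝ) / 2) :=
          mul_le_mul_of_nonneg_right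
            (Real.rpow_le_rpow_of_nonpos hx0 hxI (by norm_num)) (by positivity)
  · intro I hI
    obtain ⟨-, hI0, -, hIq⟩ := Finset.mem_filter.1 hI
    refine ⟨hI0, fun q hq => ?_⟩
    have hp : q.IsPrime :=
      Ideal.isPrime_of_prime (UniqueFactorizationMonoid.prime_of_normalized_factor q hq)
    exact (hPS q).2
      ⟨hp, hIq q hp (UniqueFactorizationMonoid.dvd_of_mem_normalizedFactors hq)⟩
end

section
/- Let K be a number field with ring of integers O_K. There exists a constant C_K > 0, depending only on K, such that for all real x ≥ 3, | Σ_{𝔭 : N(𝔭) ≤ x} 1/N(𝔭) − log log x | ≤ C_K, where the sum is over all prime ideals 𝔭 of O_K with N(𝔭) ≤ x (Mertens' estimate for number fields). -/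
/-!
The proof compares the truncated sum with the prime zeta function
`F(s) = ∑ N(𝔭)^(-s)`, evaluated just to the right of `s = 1`.

* Unique factorization of ideals gives the Euler product for `Z(s) = ∑ N(I)^(-s)`, used in the form
  of the two inequalities `exp F(s) ≤ Z(s) ≤ exp (F(s) + 2 Z(2))` for `s > 1`
  (`exp_sum_g_le`, `sum_w_le`).
* By the class number formula `δ Z(1 + δ)` stays between two positive constants as `δ → 0⁺`
  (`eventually_zeta`). Hence `F(1 + δ) = log (1 / δ) + O(1)` (`prime_sum_asymp`), and in particular
  `F(1 + δ) - F(1 + 2δ) = O(1)`.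
* Put `δ = 1 / log x`, so that `log (1 / δ) = log log x`. With `N(𝔭) = x ^ u` the terms of `F(1 + δ)`
  and `F(1 + 2δ)` are `exp (-u) / N(𝔭)` and `exp (-2u) / N(𝔭)`, and an elementary comparison
  (separately for `u ≤ 1` and `u > 1`) shows that each term of `∑_{N(𝔭) ≤ x} 1 / N(𝔭) - F(1 + δ)` is
  at most three times the corresponding term of `F(1 + δ) - F(1 + 2δ)` in absolute value
  (`f_sub_g_le`). So the truncated sum is `F(1 + δ) + O(1) = log log x + O(1)`; no Chebyshev-type
  bound is needed.

The bounded range of `x` where `δ` is not yet small is handled by monotonicity.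
-/

set_option maxHeartbeats 1000000
set_option synthInstance.maxHeartbeats 1000000

open scoped Classical
open NumberField

namespace MertensNF

open Filter Topology UniqueFactorizationMonoid

variable {K : Type*} [Field K] [NumberField K]

/-! ### The weights `N(I)^(-s)` -/

/-- The weight `N(I)^(-s)`. For `s ≠ 0` it vanishes at the zero ideal, so sums over all ideals are
sums over the nonzero ones. -/
noncomputable def w (s : ℝ) (I : Ideal (𝓞 K)) : ℝ := (Ideal.absNorm I : ℝ) ^ (-s)

/-- The terms of the prime zeta function: `N(q)^(-s)` at a prime ideal `q`, and `0` elsewhere.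
The zero ideal is prime, but contributes `0` when `s ≠ 0`. -/
noncomputable def g (s : ℝ) (q : Ideal (𝓞 K)) : ℝ := if q.IsPrime then w s q else 0

lemma w_nonneg (s : ℝ) (I : Ideal (𝓞 K)) : 0 ≤ w s I := by unfold w; positivity

lemma g_nonneg (s : ℝ) (I : Ideal (𝓞 K)) : 0 ≤ g s I := by
  unfold g; split_ifs; exacts [w_nonneg s I, le_rfl]

lemma g_le_w (s : ℝ) (I : Ideal (𝓞 K)) : g s I ≤ w s I := by
  unfold g; split_ifs; exacts [le_rfl, w_nonneg s I]

lemma w_mul (s : ℝ) (I J : Ideal (𝓞 K)) : w s (I * J) = w s I * w s J := by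
  simp [w, Real.mul_rpow]

lemma w_one (s : ℝ) : w s (1 : Ideal (𝓞 K)) = 1 := by simp [w]

lemma w_bot {s : ℝ} (hs : 0 < s) : w s (⊥ : Ideal (𝓞 K)) = 0 := by
  simp [w, Real.zero_rpow (neg_ne_zero.mpr hs.ne')]

/-- The weight as a monoid homomorphism. -/
noncomputable def wHom (s : ℝ) : Ideal (𝓞 K) →* ℝ where
  toFun := w s
  map_one' := w_one s
  map_mul' := w_mul s

lemma two_le_absNorm {p : Ideal (𝓞 K)} (hp : Prime p) : 2 ≤ Ideal.absNorm p := by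
  have h0 : Ideal.absNorm p ≠ 0 := by
    rw [Ne, Ideal.absNorm_eq_zero_iff]; exact hp.ne_zero
  have h1 : Ideal.absNorm p ≠ 1 := by
    rw [Ne, Ideal.absNorm_eq_one_iff]; exact (Ideal.isPrime_of_prime hp).ne_top
  omega

lemma w_prime_le_half {s : ℝ} (hs : 1 ≤ s) {p : Ideal (𝓞 K)} (hp : Prime p) : w s p ≤ 1 / 2 := by
  have h2 : (2 : ℝ) ≤ Ideal.absNorm p := by exact_mod_cast two_le_absNorm hp
  calc w s p ≤ (Ideal.absNorm p : ℝ) ^ (-1 : ℝ) :=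
        Real.rpow_le_rpow_of_exponent_le (by linarith) (by linarith)
    _ ≤ 1 / 2 := by
        rw [Real.rpow_neg_one, ← one_div]
        exact one_div_le_one_div_of_le (by norm_num) h2

lemma w_anti {s t : ℝ} (hs : 0 < s) (hst : s ≤ t) (I : Ideal (𝓞 K)) : w t I ≤ w s I := by
  rcases eq_or_ne I ⊥ with rfl | hI
  · rw [w_bot hs, w_bot (hs.trans_le hst)]
  · have : (1 : ℝ) ≤ Ideal.absNorm I := by
      have : Ideal.absNorm I ≠ 0 := by rwa [Ne, Ideal.absNorm_eq_zero_iff]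
      exact_mod_cast Nat.one_le_iff_ne_zero.mpr this
    exact Real.rpow_le_rpow_of_exponent_le this (by linarith)

/-! ### Finite Euler products -/

/-- The ideal `∏ p ^ e p` with exponents `e` on the finite set `S`. -/
noncomputable def ofExp (S : Finset (Ideal (𝓞 K))) (e : S → ℕ) : Ideal (𝓞 K) :=
  ∏ p : S, (p : Ideal (𝓞 K)) ^ e p

/-- Uniqueness of factorization into primes. -/
lemma ofExp_injective (S : Finset (Ideal (𝓞 K))) (hS : ∀ p ∈ S, Prime p) :
    Function.Injective (ofExp S) := by
  have key : ∀ e : S → ℕ, normalizedFactors (ofExp S e) =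
      ∑ p : S, Multiset.replicate (e p) (p : Ideal (𝓞 K)) := by
    intro e
    have h : ofExp S e = (∑ p : S, Multiset.replicate (e p) (p : Ideal (𝓞 K))).prod := by
      simp [ofExp, Multiset.prod_sum]
    rw [h]
    refine normalizedFactors_prod_of_prime fun p hp => ?_
    obtain ⟨q, -, hq⟩ := Multiset.mem_sum.mp hp
    rw [Multiset.eq_of_mem_replicate hq]
    exact hS _ q.2
  intro e f hef
  have h := key e
  rw [hef, key f] at h
  funext q
  have hc := congrArg (Multiset.count (q : Ideal (𝓞 K))) h
  simpa [Multiset.count_sum', Multiset.count_replicate, Subtype.coe_inj] using hc.symm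

/-- A truncated finite Euler product, expanded into a sum over distinct ideals. -/
lemma prod_geom_eq (s : ℝ) (S : Finset (Ideal (𝓞 K))) (hS : ∀ p ∈ S, Prime p) (M : ℕ) :
    ∏ p ∈ S, ∑ k ∈ Finset.range M, w s p ^ k =
      ∑ I ∈ (Fintype.piFinset fun _ : S => Finset.range M).image (ofExp S), w s I := by
  rw [Finset.sum_image (ofExp_injective S hS).injOn, ← Finset.prod_coe_sort, Finset.prod_univ_sum]
  refine Finset.sum_congr rfl fun e _ => ?_
  change _ = wHom s (ofExp S e)
  rw [ofExp, map_prod]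
  refine Finset.prod_congr rfl fun p _ => ?_
  rw [map_pow]; rfl

/-- Existence of factorization, uniformly over a finite set of nonzero ideals. -/
lemma exists_subset_image (T : Finset (Ideal (𝓞 K))) (hT : ∀ I ∈ T, I ≠ ⊥) :
    ∃ (S : Finset (Ideal (𝓞 K))) (M : ℕ), (∀ p ∈ S, Prime p) ∧
      T ⊆ (Fintype.piFinset fun _ : S => Finset.range M).image (ofExp S) := by
  refine ⟨T.biUnion fun I => (normalizedFactors I).toFinset,
    (T.sup fun I => (normalizedFactors I).card) + 1, ?_, ?_⟩
  · intro p hp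
    simp only [Finset.mem_biUnion, Multiset.mem_toFinset] at hp
    obtain ⟨I, -, hI⟩ := hp
    exact prime_of_normalized_factor p hI
  · intro I hI
    rw [Finset.mem_image]
    refine ⟨fun p => (normalizedFactors I).count p.1, ?_, ?_⟩
    · rw [Fintype.mem_piFinset]
      intro p
      rw [Finset.mem_range, Nat.lt_succ_iff]
      exact (Multiset.count_le_card _ _).trans
        (Finset.le_sup (f := fun I => (normalizedFactors I).card) hI)
    · rw [ofExp, Finset.prod_coe_sort (T.biUnion fun I => (normalizedFactors I).toFinset)
        (fun p => p ^ (normalizedFactors I).count p)]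
      rw [← Finset.prod_multiset_count_of_subset]
      · exact Ideal.prod_normalizedFactors_eq_self (hT I hI)
      · exact Finset.subset_biUnion_of_mem (fun I => (normalizedFactors I).toFinset) hI

/-! ### Summability and the behaviour of `∑ N(I)^(-s)` at `s = 1` -/

/-- Nonvanishing of the Dedekind zeta function is used as a certificate of summability: an
`LSeries` that does not converge absolutely has the value `0`. -/
lemma summable_w_of_zeta {s : ℝ} (hs : 1 < s) (hz : dedekindZeta K s ≠ 0) :
    Summable (w (K := K) s) ∧ dedekindZeta K s = ((∑' I : Ideal (𝓞 K), w s I : ℝ) : ℂ) := by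
  have hterm : ∀ n : ℕ,
      LSeries.term (fun n ↦ (Nat.card {I : Ideal (𝓞 K) // Ideal.absNorm I = n} : ℂ)) s n =
      ((∑' I : {I : Ideal (𝓞 K) // Ideal.absNorm I = n}, w s I.1 : ℝ) : ℂ) := by
    intro n
    have h1 : ∀ I : {I : Ideal (𝓞 K) // Ideal.absNorm I = n}, w s I.1 = (n : ℝ) ^ (-s) := by
      intro I; rw [w, I.2]
    simp_rw [h1]
    rw [tsum_const, nsmul_eq_mul, LSeries.term_def]
    split_ifs with h
    · subst h
      simp [Real.zero_rpow (neg_ne_zero.mpr (by linarith : s ≠ 0))]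
    · push_cast
      rw [Real.rpow_neg (Nat.cast_nonneg n), div_eq_mul_inv, Complex.ofReal_inv,
        Complex.ofReal_cpow (Nat.cast_nonneg n)]
      simp
  have hsum : Summable fun n : ℕ =>
      (∑' I : {I : Ideal (𝓞 K) // Ideal.absNorm I = n}, w s I.1 : ℝ) := by
    by_contra h
    apply hz
    rw [dedekindZeta, LSeries, tsum_congr hterm]
    refine tsum_eq_zero_of_not_summable ?_
    rwa [Complex.summable_ofReal]
  let e := Equiv.sigmaFiberEquiv (Ideal.absNorm : Ideal (𝓞 K) → ℕ)
  have hfin : ∀ n : ℕ, Summable fun I : {I : Ideal (𝓞 K) // Ideal.absNorm I = n} => w s I.1 := by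
    intro n
    have : Finite {I : Ideal (𝓞 K) // Ideal.absNorm I = n} :=
      (Ideal.finite_setOfPred_absNorm_eq n).to_subtype
    exact Summable.of_finite
  have hS : Summable (w s ∘ e) := by
    rw [summable_sigma_of_nonneg]
    · exact ⟨hfin, hsum⟩
    · exact fun x => w_nonneg s _
  refine ⟨(Equiv.summable_iff e).mp hS, ?_⟩
  rw [dedekindZeta, LSeries, tsum_congr hterm, ← Complex.ofReal_tsum]
  congr 1
  rw [← Equiv.tsum_eq e]
  exact (Summable.tsum_sigma' hfin hS).symm

/-- The class number formula, weakened to bounds on `δ Z(1 + δ)` for small `δ > 0`, where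
`Z(s) = ∑ N(I)^(-s)`. -/
lemma eventually_zeta (K : Type*) [Field K] [NumberField K] :
    ∃ a b ε : ℝ, 0 < a ∧ 0 < b ∧ 0 < ε ∧ ∀ δ : ℝ, 0 < δ → δ < ε →
      Summable (w (K := K) (1 + δ)) ∧ a ≤ δ * ∑' I : Ideal (𝓞 K), w (1 + δ) I ∧
        δ * ∑' I : Ideal (𝓞 K), w (1 + δ) I ≤ b := by
  have hk := dedekindZeta_residue_pos K
  set κ := dedekindZeta_residue K
  have ht := tendsto_sub_one_mul_dedekindZeta_nhdsGT K
  have hev := ht (Metric.ball_mem_nhds (κ : ℂ) (half_pos hk))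
  rw [mem_map, mem_nhdsGT_iff_exists_Ioo_subset] at hev
  obtain ⟨u, hu, hsub⟩ := hev
  refine ⟨κ / 2, 2 * κ, u - 1, by positivity, by positivity, sub_pos.mpr hu, ?_⟩
  intro δ h0 h1
  have hmem := hsub (show 1 + δ ∈ Set.Ioo 1 u from ⟨by linarith, by linarith⟩)
  rw [Set.mem_preimage, mem_ball_iff_norm] at hmem
  have hz : dedekindZeta K ((1 + δ : ℝ) : ℂ) ≠ 0 := by
    intro h
    rw [h, mul_zero, zero_sub, norm_neg, Complex.norm_real, Real.norm_of_nonneg hk.le] at hmem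
    linarith
  obtain ⟨hs, he⟩ := summable_w_of_zeta (K := K) (by linarith : 1 < 1 + δ) hz
  rw [he] at hmem
  have h3 : |δ * (∑' I : Ideal (𝓞 K), w (1 + δ) I) - κ| < κ / 2 := by
    rw [← Real.norm_eq_abs, ← Complex.norm_real]
    refine lt_of_eq_of_lt ?_ hmem
    congr 1
    push_cast
    ring
  rw [abs_lt] at h3
  exact ⟨hs, by linarith, by linarith⟩

lemma summable_w {s : ℝ} (hs : 1 < s) : Summable (w (K := K) s) := by
  obtain ⟨a, b, ε, -, -, hε, h⟩ := eventually_zeta K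
  have hm : 0 < min (ε / 2) (s - 1) := lt_min (by linarith) (by linarith)
  have h1 := (h (min (ε / 2) (s - 1)) hm ((min_le_left _ _).trans_lt (by linarith))).1
  refine Summable.of_nonneg_of_le (w_nonneg s) (fun I => w_anti (by linarith) ?_ I) h1
  linarith [min_le_right (ε / 2) (s - 1)]

lemma summable_g {s : ℝ} (hs : 1 < s) : Summable (g (K := K) s) :=
  Summable.of_nonneg_of_le (g_nonneg s) (g_le_w s) (summable_w hs)

lemma g_bot {s : ℝ} (hs : 0 < s) : g s (⊥ : Ideal (𝓞 K)) = 0 := by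
  simp [g, w_bot hs]

/-! ### The prime zeta function near `s = 1` -/

/-- Half of the Euler product: `exp a ≤ (1 - a)⁻¹` for each local factor, and a finite Euler
product is at most the sum over all ideals. -/
lemma exp_sum_g_le {s : ℝ} (hs : 1 < s) :
    Real.exp (∑' q : Ideal (𝓞 K), g s q) ≤ ∑' I : Ideal (𝓞 K), w s I := by
  have hZ : (1 : ℝ) ≤ ∑' I : Ideal (𝓞 K), w s I := by
    rw [← w_one (K := K) s]
    exact (summable_w hs).le_tsum _ fun _ _ => w_nonneg s _
  rw [← Real.le_log_iff_exp_le (by linarith)]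
  refine (summable_g hs).tsum_le_of_sum_le fun T => ?_
  rw [Real.le_log_iff_exp_le (by linarith)]
  set S := T.filter Prime with hSdef
  have hS : ∀ p ∈ S, Prime p := fun p hp => (Finset.mem_filter.mp hp).2
  have hTS : ∑ q ∈ T, g s q = ∑ p ∈ S, w s p := by
    rw [hSdef, Finset.sum_filter]
    refine Finset.sum_congr rfl fun q _ => ?_
    rcases eq_or_ne q ⊥ with rfl | hq
    · rw [g_bot (by linarith), w_bot (by linarith)]; simp
    · simp [g, Ideal.prime_iff_isPrime hq]
  rw [hTS, Real.exp_sum]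
  calc ∏ p ∈ S, Real.exp (w s p) ≤ ∏ p ∈ S, (1 - w s p)⁻¹ := by
        refine Finset.prod_le_prod (fun _ _ => (Real.exp_pos _).le) fun p hp => ?_
        have h2 := w_prime_le_half hs.le (hS p hp)
        rw [← inv_inv (Real.exp (w s p)), ← Real.exp_neg]
        exact inv_anti₀ (by linarith) (by linarith [Real.add_one_le_exp (-(w s p))])
    _ ≤ ∑' I : Ideal (𝓞 K), w s I := by
        have hlim : Tendsto (fun M => ∏ p ∈ S, ∑ k ∈ Finset.range M, w s p ^ k) atTop
            (𝓝 (∏ p ∈ S, (1 - w s p)⁻¹)) := by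
          refine tendsto_finsetProd _ fun p hp => ?_
          exact (hasSum_geometric_of_lt_one (w_nonneg s p)
            (by linarith [w_prime_le_half hs.le (hS p hp)])).tendsto_sum_nat
        refine le_of_tendsto' hlim fun M => ?_
        rw [prod_geom_eq s S hS M]
        exact (summable_w hs).sum_le_tsum _ fun _ _ => w_nonneg s _

lemma geom_le_exp {a : ℝ} (h0 : 0 ≤ a) (h1 : a ≤ 1 / 2) (M : ℕ) :
    ∑ k ∈ Finset.range M, a ^ k ≤ Real.exp (a + 2 * a ^ 2) := by
  have h := hasSum_geometric_of_lt_one h0 (by linarith : a < 1)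
  calc ∑ k ∈ Finset.range M, a ^ k ≤ (1 - a)⁻¹ :=
        sum_le_hasSum _ (fun _ _ => by positivity) h
    _ ≤ (a + 2 * a ^ 2) + 1 := by
        rw [inv_le_iff_one_le_mul₀ (by linarith)]
        nlinarith [mul_nonneg h0 h0, mul_nonneg (mul_nonneg h0 h0) (by linarith : 0 ≤ 1 - 2 * a)]
    _ ≤ _ := Real.add_one_le_exp _

/-- The other half of the Euler product. The term `2 ∑ N(I)^(-2)` absorbs the quadratic error in
`(1 - a)⁻¹ ≤ exp (a + 2 a²)`. -/
lemma sum_w_le {s : ℝ} (hs : 1 < s) :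
    ∑' I : Ideal (𝓞 K), w s I ≤
      Real.exp (∑' q : Ideal (𝓞 K), g s q + 2 * ∑' I : Ideal (𝓞 K), w 2 I) := by
  refine (summable_w hs).tsum_le_of_sum_le fun T => ?_
  obtain ⟨S, M, hS, hsub⟩ := exists_subset_image (T.filter (· ≠ ⊥))
    (fun I hI => (Finset.mem_filter.mp hI).2)
  have hT : ∑ I ∈ T, w s I = ∑ I ∈ T.filter (· ≠ ⊥), w s I := by
    rw [Finset.sum_filter]
    refine Finset.sum_congr rfl fun I _ => ?_
    split_ifs with h
    · rfl
    · rw [not_not.mp h, w_bot (by linarith)]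
  rw [hT]
  calc _ ≤ _ := Finset.sum_le_sum_of_subset_of_nonneg hsub fun _ _ _ => w_nonneg s _
    _ = ∏ p ∈ S, ∑ k ∈ Finset.range M, w s p ^ k := (prod_geom_eq s S hS M).symm
    _ ≤ ∏ p ∈ S, Real.exp (g s p + 2 * w 2 p) := by
        refine Finset.prod_le_prod
          (fun p _ => Finset.sum_nonneg fun k _ => pow_nonneg (w_nonneg s p) k) fun p hp => ?_
        refine (geom_le_exp (w_nonneg s p) (w_prime_le_half hs.le (hS p hp)) M).trans ?_
        have hg : g s p = w s p := by simp [g, Ideal.isPrime_of_prime (hS p hp)]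
        have h2 : w s p ^ 2 ≤ w 2 p := by
          have : w s p ^ 2 = w (2 * s) p := by
            rw [w, w, ← Real.rpow_natCast, ← Real.rpow_mul (Nat.cast_nonneg _)]
            congr 1
            push_cast
            ring
          rw [this]
          exact w_anti (by norm_num) (by linarith) p
        rw [hg]
        gcongr
    _ = Real.exp (∑ p ∈ S, g s p + 2 * ∑ p ∈ S, w 2 p) := by
        rw [← Real.exp_sum, Finset.sum_add_distrib, Finset.mul_sum]
    _ ≤ _ := by
        have h1 := (summable_g (K := K) hs).sum_le_tsum S fun _ _ => g_nonneg s _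
        have h2 := (summable_w (K := K) one_lt_two).sum_le_tsum S fun _ _ => w_nonneg 2 _
        gcongr

/-- `∑ N(𝔭)^(-1-δ) = log (1 / δ) + O(1)` as `δ → 0⁺`. -/
lemma prime_sum_asymp (K : Type*) [Field K] [NumberField K] :
    ∃ B ε : ℝ, 0 < B ∧ 0 < ε ∧ ∀ δ : ℝ, 0 < δ → δ < ε →
      |∑' q : Ideal (𝓞 K), g (1 + δ) q - Real.log (1 / δ)| ≤ B := by
  obtain ⟨a, b, ε, ha, hb, hε, h⟩ := eventually_zeta K
  have hW : 0 ≤ ∑' I : Ideal (𝓞 K), w 2 I := tsum_nonneg (w_nonneg 2)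
  refine ⟨|Real.log a| + |Real.log b| + 2 * (∑' I : Ideal (𝓞 K), w 2 I) + 1, ε,
    by positivity, hε, ?_⟩
  intro δ h0 h1
  obtain ⟨-, h2, h3⟩ := h δ h0 h1
  have hZ : 0 < ∑' I : Ideal (𝓞 K), w (1 + δ) I :=
    pos_of_mul_pos_right (ha.trans_le h2) h0.le
  have hup := exp_sum_g_le (K := K) (by linarith : 1 < 1 + δ)
  have hlo := sum_w_le (K := K) (by linarith : 1 < 1 + δ)
  rw [← Real.le_log_iff_exp_le hZ] at hup
  rw [← Real.log_le_iff_le_exp hZ] at hlo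
  have h4 := Real.log_le_log ha h2
  have h5 := Real.log_le_log (ha.trans_le h2) h3
  rw [Real.log_mul h0.ne' hZ.ne'] at h4 h5
  rw [one_div, Real.log_inv, abs_le]
  constructor <;>
    linarith [neg_abs_le (Real.log a), le_abs_self (Real.log b), abs_nonneg (Real.log a),
      abs_nonneg (Real.log b)]

/-! ### Comparison with the truncated sum -/

/-- The terms of the truncated sum: `1 / N(q)` at a prime `q` of norm at most `x`, and `0`
elsewhere. The zero ideal contributes `1 / 0 = 0`. -/
noncomputable def f (x : ℝ) (q : Ideal (𝓞 K)) : ℝ :=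
  if q.IsPrime ∧ (Ideal.absNorm q : ℝ) ≤ x then 1 / (Ideal.absNorm q : ℝ) else 0

lemma f_nonneg (x : ℝ) (q : Ideal (𝓞 K)) : 0 ≤ f x q := by
  unfold f; split_ifs <;> positivity

lemma f_mono {x y : ℝ} (h : x ≤ y) (q : Ideal (𝓞 K)) : f x q ≤ f y q := by
  by_cases hx : q.IsPrime ∧ (Ideal.absNorm q : ℝ) ≤ x
  · rw [f, f, if_pos hx, if_pos ⟨hx.1, hx.2.trans h⟩]
  · rw [f, if_neg hx]; exact f_nonneg y q

lemma summable_f (x : ℝ) : Summable (f (K := K) x) := by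
  refine summable_of_hasFiniteSupport ((Ideal.finite_setOfPred_absNorm_le ⌊x⌋₊).subset ?_)
  intro q hq
  rw [Function.mem_support, f] at hq
  have h := (ite_ne_right_iff.mp hq).1
  exact Nat.le_floor h.2

/-- With `N(q) = x ^ u`, the claim is `|1_{u ≤ 1} - exp (-u)| ≤ 3 (exp (-u) - exp (-2u))` after
multiplication by `N(q)`. For `u ≤ 1` it follows from `exp (-u) ≥ 1/3`, for `u > 1` from
`exp (-u) ≤ 1/2`. -/
lemma f_sub_g_le {x : ℝ} (hx : 1 < x) (q : Ideal (𝓞 K)) :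
    |f x q - g (1 + 1 / Real.log x) q| ≤
      3 * (g (1 + 1 / Real.log x) q - g (1 + 2 * (1 / Real.log x)) q) := by
  have hL : 0 < Real.log x := Real.log_pos hx
  by_cases hp : q.IsPrime
  swap
  · simp [f, g, hp]
  rcases eq_or_ne q ⊥ with rfl | hq
  · rw [g_bot (by positivity), g_bot (by positivity)]; simp [f]
  have hN0 : Ideal.absNorm q ≠ 0 := by rwa [Ne, Ideal.absNorm_eq_zero_iff]
  have hN : (1 : ℝ) ≤ Ideal.absNorm q := by exact_mod_cast Nat.one_le_iff_ne_zero.mpr hN0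
  set N : ℝ := (Ideal.absNorm q : ℝ) with hNdef
  have hNpos : 0 < N := by linarith
  set u := Real.log N / Real.log x with hu
  have hu0 : 0 ≤ u := div_nonneg (Real.log_nonneg hN) hL.le
  have e1 : g (1 + 1 / Real.log x) q = N⁻¹ * Real.exp (-u) := by
    rw [g, if_pos hp, w, ← hNdef, Real.rpow_def_of_pos hNpos]
    nth_rw 2 [← Real.exp_log hNpos]
    rw [← Real.exp_neg, ← Real.exp_add, hu]
    congr 1; ring
  have e2 : g (1 + 2 * (1 / Real.log x)) q = N⁻¹ * (Real.exp (-u) * Real.exp (-u)) := by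
    rw [g, if_pos hp, w, ← hNdef, Real.rpow_def_of_pos hNpos]
    nth_rw 2 [← Real.exp_log hNpos]
    rw [← Real.exp_neg, ← Real.exp_add, ← Real.exp_add, hu]
    congr 1; ring
  have hexp1 : Real.exp (-u) ≤ 1 := Real.exp_le_one_iff.mpr (by linarith)
  have hepos := Real.exp_pos (-u)
  have hNi : 0 < N⁻¹ := by positivity
  have he3 : Real.exp 1 < 3 := Real.exp_one_lt_three
  have he2 : 2 < Real.exp 1 := by linarith [Real.exp_one_gt_d9]
  by_cases hle : N ≤ x
  · have hu1 : u ≤ 1 := (div_le_one hL).mpr (Real.log_le_log hNpos hle)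
    have hlow : 1 / 3 ≤ Real.exp (-u) := by
      have : Real.exp (-1) ≤ Real.exp (-u) := Real.exp_le_exp.mpr (by linarith)
      refine le_trans ?_ this
      rw [Real.exp_neg, one_div]
      exact inv_anti₀ (Real.exp_pos 1) he3.le
    have hf : f x q = N⁻¹ := by rw [f, if_pos ⟨hp, hle⟩, one_div]
    rw [hf, e1, e2, abs_of_nonneg (by nlinarith)]
    have : N⁻¹ * ((1 - Real.exp (-u)) * (3 * Real.exp (-u) - 1)) ≥ 0 :=
      mul_nonneg hNi.le (mul_nonneg (by linarith) (by linarith))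
    nlinarith
  · have hu1 : 1 ≤ u := (one_le_div hL).mpr (Real.log_le_log (by linarith) (not_le.mp hle).le)
    have hhi : Real.exp (-u) ≤ 1 / 2 := by
      have : Real.exp (-u) ≤ Real.exp (-1) := Real.exp_le_exp.mpr (by linarith)
      refine this.trans ?_
      rw [Real.exp_neg, one_div]
      exact inv_anti₀ (by norm_num) he2.le
    have hf : f x q = 0 := by rw [f, if_neg (fun h => hle h.2)]
    rw [hf, e1, e2, zero_sub, abs_neg, abs_of_nonneg (by positivity)]
    have : N⁻¹ * (Real.exp (-u) * (1 - 2 * Real.exp (-u))) ≥ 0 :=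
      mul_nonneg hNi.le (mul_nonneg hepos.le (by linarith))
    nlinarith [mul_pos hNi hepos]

end MertensNF

open MertensNF in
/-- Mertens' estimate for number fields. -/
theorem mertens_number_field (K : Type*) [Field K] [NumberField K] :
    ∃ C : ℝ, 0 < C ∧ ∀ x : ℝ, 3 ≤ x →
      |(∑' q : Ideal (𝓞 K),
          (if q.IsPrime ∧ (Ideal.absNorm q : ℝ) ≤ x
           then 1 / (Ideal.absNorm q : ℝ) else 0)) - Real.log (Real.log x)| ≤ C := by
  obtain ⟨B, ε, hB, hε, h⟩ := prime_sum_asymp K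
  -- `δ = 1 / log x` satisfies `2 δ < ε` once `x > X`.
  set X : ℝ := Real.exp (2 / ε) with hX
  have hS0 : ∀ y : ℝ, 0 ≤ ∑' q : Ideal (𝓞 K), f y q := fun y => tsum_nonneg (f_nonneg y)
  have hl2 : 0 < Real.log 2 := Real.log_pos one_lt_two
  refine ⟨3 * (2 * B + Real.log 2) + B + (∑' q : Ideal (𝓞 K), f X q + |Real.log (2 / ε)|),
    by have := hS0 X; positivity, ?_⟩
  intro x hx
  change |∑' q : Ideal (𝓞 K), f x q - Real.log (Real.log x)| ≤ _
  have hL1 : 1 < Real.log x := by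
    rw [Real.lt_log_iff_exp_lt (by linarith)]
    linarith [Real.exp_one_lt_three]
  have hL : 0 < Real.log x := by linarith
  rcases le_or_gt x X with hxX | hxX
  · have h1 : ∑' q : Ideal (𝓞 K), f x q ≤ ∑' q : Ideal (𝓞 K), f X q :=
      (summable_f x).tsum_le_tsum (f_mono hxX) (summable_f X)
    have h2 : Real.log (Real.log x) ≤ Real.log (2 / ε) := by
      refine Real.log_le_log hL ?_
      rw [Real.log_le_iff_le_exp (by linarith)]
      exact hxX
    have h3 : 0 ≤ Real.log (Real.log x) := Real.log_nonneg hL1.le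
    rw [abs_le]
    constructor <;> linarith [hS0 x, hS0 X, le_abs_self (Real.log (2 / ε)),
      abs_nonneg (Real.log (2 / ε))]
  · have hLX : 2 / ε < Real.log x := by
      rw [Real.lt_log_iff_exp_lt (by linarith)]; exact hxX
    set δ := 1 / Real.log x with hδ
    have hδ0 : 0 < δ := by positivity
    have hδε : 2 * δ < ε := by
      rw [div_lt_iff₀ hε] at hLX
      rw [hδ, mul_one_div, div_lt_iff₀ hL]; linarith
    have a1 := h δ hδ0 (by linarith)
    have a2 := h (2 * δ) (by linarith) hδε
    have hll : Real.log (1 / δ) = Real.log (Real.log x) := by rw [hδ, one_div_one_div]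
    have hll2 : Real.log (1 / (2 * δ)) = Real.log (Real.log x) - Real.log 2 := by
      rw [← hll, ← Real.log_div (by positivity) (by norm_num)]
      congr 1; field_simp
    rw [hll] at a1
    rw [hll2] at a2
    have s1 := summable_g (K := K) (by linarith : 1 < 1 + δ)
    have s2 := summable_g (K := K) (by linarith : 1 < 1 + 2 * δ)
    have hd : |∑' q : Ideal (𝓞 K), f x q - ∑' q : Ideal (𝓞 K), g (1 + δ) q| ≤
        3 * (∑' q : Ideal (𝓞 K), g (1 + δ) q - ∑' q : Ideal (𝓞 K), g (1 + 2 * δ) q) := by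
      rw [← (summable_f x).tsum_sub s1, ← s1.tsum_sub s2, ← tsum_mul_left, ← Real.norm_eq_abs]
      exact tsum_of_norm_bounded ((s1.sub s2).mul_left 3).hasSum
        fun q => f_sub_g_le (by linarith) q
    have := hS0 X
    have := abs_nonneg (Real.log (2 / ε))
    rw [abs_le] at a1 a2 hd ⊢
    constructor <;> linarith [a1.1, a1.2, a2.1, a2.2, hd.1, hd.2]
end

section
/- Assume the number-field distortion setup, let y ≥ 2 be a real number, and suppose that δ_i = 0 for every index i with N(p_i) ≤ y. Then Σ_{j : 1 ≤ j ≤ J, N(p_j) ≤ y} M_j^{(1)} ≤ s · N(I_1)^{−1/2} · ∏_{𝔭 : N(𝔭) ≤ y} (1 − N(𝔭)^{−1/2})^{−1}, where the product is over all prime ideals 𝔭 of O_K with N(𝔭) ≤ y. -/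
/-!
For an index `j` with `N(p_j) ≤ y`, every earlier prime also has norm at most `y`, so the
distortion parameters `δ_1, …, δ_{j-1}` vanish and `P_{j-1}` is still the uniform measure.
Averaging the relative density `α_j` over the fibres of `π_{j-1}` returns the density of `B_j`
(`sum_coset_density`), and by the union bound this density is at most the sum of `1 / N(I_i)`
over the `i` with `P_min(I_i) = p_j` (`card_residue_class`).

An ideal has only one `P_min`, so summing over `j` bounds the left-hand side by the sum of
`1 / N(I_i)` over those `i` for which all prime factors of `I_i` have norm at most `y`. Since
`1 / N(I_i) ≤ N(I_1)^{-1/2} N(I_i)^{-1/2}` and every ideal occurs at most `s` times, it remains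
to bound the sum of `N(I)^{-1/2}` over finitely many distinct ideals composed of primes of norm at
most `y`. By unique factorization this is at most the Euler product
(`sum_le_euler_product`).
-/

set_option maxHeartbeats 1000000
set_option synthInstance.maxHeartbeats 1000000

open scoped Classical
open NumberField

/-- The average over an additive group of the relative density of `B` in the cosets of a
submodule `H` is the density of `B`, stated without the normalising factor. -/
lemma sum_coset_density {R M : Type*} [Ring R] [AddCommGroup M] [Module R M] [Fintype M]
    (H : Submodule R M) (B : Finset M) :
    ∑ x : M, (((Finset.univ.filter fun x' : M => x' - x ∈ H) ∩ B).card : ℝ) /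
      ((Finset.univ.filter fun x' : M => x' - x ∈ H).card : ℝ) = B.card := by
  set c : ℕ := (Finset.univ.filter fun x : M => x ∈ H).card with hc
  have hc0 : (c : ℝ) ≠ 0 := by
    have : 0 < c := Finset.card_pos.mpr ⟨0, by simp⟩
    positivity
  have h1 : ∀ x : M, (Finset.univ.filter fun x' : M => x' - x ∈ H).card = c := by
    intro x
    refine Finset.card_bij (fun x' _ => x' - x) ?_ ?_ ?_
    · intro b hb; simpa using hb
    · intro b _ b' _ h; simpa using h
    · intro b hb
      exact ⟨b + x, by simpa using hb, by simp⟩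
  have h2 : ∀ b : M, (Finset.univ.filter fun x : M => b - x ∈ H).card = c := by
    intro b
    refine Finset.card_bij (fun x _ => b - x) ?_ ?_ ?_
    · intro x hx; simpa using hx
    · intro x _ x' _ h; simpa using h
    · intro x hx
      exact ⟨b - x, by simpa using hx, by simp⟩
  have h3 : ∑ x : M, ((Finset.univ.filter fun x' : M => x' - x ∈ H) ∩ B).card = B.card * c := by
    have : ∀ x : M, ((Finset.univ.filter fun x' : M => x' - x ∈ H) ∩ B).card
        = ∑ b ∈ B, if b - x ∈ H then 1 else 0 := by
      intro x
      rw [← Finset.card_filter]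
      congr 1
      ext b
      simp [and_comm]
    simp_rw [this]
    rw [Finset.sum_comm]
    simp_rw [← Finset.card_filter, h2]
    simp
  simp_rw [h1]
  rw [← Finset.sum_div, ← Nat.cast_sum, h3]
  push_cast
  field_simp

/-- A residue class modulo an ideal `I ⊇ Q` has density `1 / N(I)` in `O_K / Q`. -/
lemma card_residue_class {K : Type*} [Field K] [NumberField K] (Q I : Ideal (𝓞 K))
    [Fintype (𝓞 K ⧸ Q)] (hQI : Q ≤ I) (a : 𝓞 K ⧸ Q) :
    ((Finset.univ.filter fun x : 𝓞 K ⧸ Q =>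
        x - a ∈ I.map (Ideal.Quotient.mk Q)).card : ℝ) / (Fintype.card (𝓞 K ⧸ Q) : ℝ)
      = ((Ideal.absNorm I : ℕ) : ℝ)⁻¹ := by
  set H := I.map (Ideal.Quotient.mk Q) with hH
  have h1 : (Finset.univ.filter fun x : 𝓞 K ⧸ Q => x - a ∈ H).card = Nat.card H := by
    rw [Nat.card_eq_fintype_card, Fintype.card_subtype]
    refine Finset.card_bij (fun x' _ => x' - a) ?_ ?_ ?_
    · intro b hb; simpa using hb
    · intro b _ b' _ h; simpa using h
    · intro b hb
      exact ⟨b + a, by simpa using hb, by simp⟩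
  have h2 : Nat.card (𝓞 K ⧸ Q) = Nat.card H * Nat.card ((𝓞 K ⧸ Q) ⧸ H) :=
    Submodule.card_eq_card_quotient_mul_card H
  have h3 : Nat.card ((𝓞 K ⧸ Q) ⧸ H) = Ideal.absNorm I :=
    Nat.card_congr (DoubleQuot.quotQuotEquivQuotOfLE hQI).toEquiv
  have hpos : 0 < Nat.card H := Nat.card_pos
  rw [h1, ← Nat.card_eq_fintype_card, h2, h3]
  push_cast
  have : (Nat.card H : ℝ) ≠ 0 := by positivity
  rw [div_mul_eq_div_div, div_self this, one_div]

lemma prime_factor_weight {K : Type*} [Field K] [NumberField K] (q : Ideal (𝓞 K))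
    (hq : q.IsPrime) (hq0 : q ≠ ⊥) :
    0 ≤ (Ideal.absNorm q : ℝ) ^ (-(1 : ℝ) / 2) ∧ (Ideal.absNorm q : ℝ) ^ (-(1 : ℝ) / 2) < 1 := by
  refine ⟨by positivity, Real.rpow_lt_one_of_one_lt_of_neg ?_ (by norm_num)⟩
  have h0 : Ideal.absNorm q ≠ 0 := by rwa [Ne, Ideal.absNorm_eq_zero_iff]
  have h1 : Ideal.absNorm q ≠ 1 := by
    rw [Ne, Ideal.absNorm_eq_one_iff]; exact hq.ne_top
  exact_mod_cast (by omega : 1 < Ideal.absNorm q)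

open UniqueFactorizationMonoid in
/-- Finite form of the Euler product bound: `S` consists of nonzero ideals all of whose prime
factors lie in `T`. -/
lemma sum_le_euler_product {K : Type*} [Field K] [NumberField K]
    (T S : Finset (Ideal (𝓞 K))) (hT : ∀ q ∈ T, q.IsPrime ∧ q ≠ ⊥)
    (hS : ∀ I ∈ S, I ≠ ⊥ ∧ ∀ q : Ideal (𝓞 K), q.IsPrime → q ∣ I → q ∈ T) :
    ∑ I ∈ S, (Ideal.absNorm I : ℝ) ^ (-(1 : ℝ) / 2) ≤
      ∏ q ∈ T, (1 - (Ideal.absNorm q : ℝ) ^ (-(1 : ℝ) / 2))⁻¹ := by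
  set f : Ideal (𝓞 K) → ℝ := fun I => (Ideal.absNorm I : ℝ) ^ (-(1 : ℝ) / 2) with hf
  have hfmul : ∀ I I', f (I * I') = f I * f I' := by
    intro I I'
    simp only [hf, map_mul, Nat.cast_mul]
    exact Real.mul_rpow (by positivity) (by positivity)
  have hf1 : f 1 = 1 := by simp [hf]
  let F : Ideal (𝓞 K) →* ℝ := ⟨⟨f, hf1⟩, hfmul⟩
  have hfac : ∀ I ∈ S, I = ∏ q ∈ T, q ^ (normalizedFactors I).count q := by
    intro I hI
    obtain ⟨h0, h⟩ := hS I hI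
    have h1 : (normalizedFactors I).prod = I :=
      associated_iff_eq.mp (prod_normalizedFactors h0)
    conv_lhs => rw [← h1]
    refine Finset.prod_multiset_count_of_subset _ _ ?_
    intro q hq
    rw [Multiset.mem_toFinset] at hq
    exact h q (Ideal.isPrime_of_prime (prime_of_normalized_factor q hq))
      (dvd_of_mem_normalizedFactors hq)
  -- A common strict bound for all exponents occurring in members of `S`.
  set m : ℕ := (∑ I ∈ S, Multiset.card (normalizedFactors I)) + 1 with hm
  have hcount : ∀ I ∈ S, ∀ q, (normalizedFactors I).count q < m := by
    intro I hI q
    have h1 := Multiset.count_le_card q (normalizedFactors I)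
    have h2 := Finset.single_le_sum (f := fun I => Multiset.card (normalizedFactors I))
      (fun _ _ => Nat.zero_le _) hI
    omega
  calc ∑ I ∈ S, f I
      = ∑ I ∈ S, ∏ q : T, f q ^ (normalizedFactors I).count (q : Ideal (𝓞 K)) := by
        refine Finset.sum_congr rfl fun I hI => ?_
        have : F I = ∏ q ∈ T, F q ^ (normalizedFactors I).count q := by
          conv_lhs => rw [hfac I hI]
          rw [map_prod]
          simp only [map_pow]
        rw [Finset.prod_coe_sort T (fun q => f q ^ (normalizedFactors I).count q)]
        exact this
    _ = ∑ e ∈ S.image (fun I => fun q : T => (normalizedFactors I).count (q : Ideal (𝓞 K))),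
          ∏ q : T, f q ^ e q := by
        rw [Finset.sum_image]
        intro I hI I' hI' h
        rw [hfac I hI, hfac I' hI']
        refine Finset.prod_congr rfl fun q hq => ?_
        have := congrFun h ⟨q, hq⟩
        simp only at this
        rw [this]
    _ ≤ ∑ e ∈ Fintype.piFinset (fun _ : T => Finset.range m), ∏ q : T, f q ^ e q := by
        refine Finset.sum_le_sum_of_subset_of_nonneg ?_ ?_
        · intro e he
          obtain ⟨I, hI, rfl⟩ := Finset.mem_image.mp he
          simpa using fun q _ => hcount I hI q
        · intro e _ _
          exact Finset.prod_nonneg fun q _ => pow_nonneg (by simp only [hf]; positivity) _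
    _ = ∏ q : T, ∑ k ∈ Finset.range m, f q ^ k := by
        rw [Finset.prod_univ_sum]
    _ ≤ ∏ q : T, (1 - f q)⁻¹ := by
        refine Finset.prod_le_prod ?_ ?_
        · intro q _
          exact Finset.sum_nonneg fun k _ => pow_nonneg (by simp only [hf]; positivity) _
        · intro q _
          obtain ⟨h0, h1⟩ := prime_factor_weight q.1 (hT q q.2).1 (hT q q.2).2
          rw [← tsum_geometric_of_lt_one h0 h1]
          exact (summable_geometric_of_lt_one h0 h1).sum_le_tsum _
            (fun k _ => pow_nonneg h0 k)
    _ = ∏ q ∈ T, (1 - f q)⁻¹ := Finset.prod_coe_sort T (fun q => (1 - f q)⁻¹)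

/-- Bound for the sum of the first moments over indices with `N(p_j) ≤ y`. -/
theorem first_moment_sum_bound
    {K : Type*} [Field K] [NumberField K]
    (n : ℕ) (hn : 0 < n)
    (a : Fin n → 𝓞 K) (Idl : Fin n → Ideal (𝓞 K))
    (hdist : ∀ i : Fin n, Distinguishable (Idl i))
    (hmono : ∀ i j : Fin n, i ≤ j → Ideal.absNorm (Idl i) ≤ Ideal.absNorm (Idl j))
    (s : ℕ)
    (hsle : ∀ I₀ : Ideal (𝓞 K), (Finset.univ.filter fun i : Fin n => Idl i = I₀).card ≤ s)
    (hseq : ∃ I₀ : Ideal (𝓞 K), (Finset.univ.filter fun i : Fin n => Idl i = I₀).card = s)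
    (Q : Ideal (𝓞 K)) (hQ : Q = ⨅ i : Fin n, Idl i)
    (J : ℕ) (p : ℕ → Ideal (𝓞 K)) (ν : ℕ → ℕ)
    (hp : ∀ j ∈ Finset.Icc 1 J, (p j).IsPrime)
    (hν : ∀ j ∈ Finset.Icc 1 J, 1 ≤ ν j)
    (hpinj : ∀ j ∈ Finset.Icc 1 J, ∀ j' ∈ Finset.Icc 1 J, p j = p j' → j = j')
    (hfact : Q = ∏ j ∈ Finset.Icc 1 J, p j ^ ν j)
    (hpmono : ∀ j ∈ Finset.Icc 1 J, ∀ j' ∈ Finset.Icc 1 J, j ≤ j' →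
      Ideal.absNorm (p j) ≤ Ideal.absNorm (p j'))
    (Qp : ℕ → Ideal (𝓞 K)) (hQp : ∀ j : ℕ, Qp j = ∏ i ∈ Finset.Icc 1 j, p i ^ ν i)
    [Fintype (𝓞 K ⧸ Q)]
    (B : ℕ → Finset (𝓞 K ⧸ Q))
    (hB : ∀ j ∈ Finset.Icc 1 J, B j = Finset.univ.filter fun x : 𝓞 K ⧸ Q =>
      ∃ i : Fin n, IsPmin (Idl i) (p j) ∧
        x - Ideal.Quotient.mk Q (a i) ∈ (Idl i).map (Ideal.Quotient.mk Q))
    (F : ℕ → (𝓞 K ⧸ Q) → Finset (𝓞 K ⧸ Q))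
    (hF : ∀ (j : ℕ) (x : 𝓞 K ⧸ Q),
      F j x = Finset.univ.filter fun x' : 𝓞 K ⧸ Q => x' - x ∈ (Qp j).map (Ideal.Quotient.mk Q))
    (α : ℕ → (𝓞 K ⧸ Q) → ℝ)
    (hα : ∀ j ∈ Finset.Icc 1 J, ∀ x : 𝓞 K ⧸ Q,
      α j x = ((F (j - 1) x ∩ B j).card : ℝ) / ((F (j - 1) x).card : ℝ))
    (δ : ℕ → ℝ) (hδ : ∀ j ∈ Finset.Icc 1 J, δ j ∈ Set.Icc (0 : ℝ) (1 / 2))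
    (P : ℕ → (𝓞 K ⧸ Q) → ℝ)
    (hP0 : ∀ x : 𝓞 K ⧸ Q, P 0 x = 1 / (Fintype.card (𝓞 K ⧸ Q) : ℝ))
    (hPrec : ∀ j ∈ Finset.Icc 1 J, ∀ x : 𝓞 K ⧸ Q,
      P j x = if α j x < δ j then (if x ∈ B j then 0 else P (j - 1) x / (1 - α j x))
        else if α j x = 0 then P (j - 1) x
        else P (j - 1) x * (α j x - (if x ∈ B j then δ j else 0)) / (α j x * (1 - δ j)))
    (y : ℝ) (hy : 2 ≤ y)
    (hδ0 : ∀ i ∈ Finset.Icc 1 J, (Ideal.absNorm (p i) : ℝ) ≤ y → δ i = 0)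
    (PS : Finset (Ideal (𝓞 K)))
    (hPS : ∀ q : Ideal (𝓞 K), q ∈ PS ↔ q.IsPrime ∧ (Ideal.absNorm q : ℝ) ≤ y) :
    ∑ j ∈ (Finset.Icc 1 J).filter (fun j => (Ideal.absNorm (p j) : ℝ) ≤ y),
        (∑ x : 𝓞 K ⧸ Q, α j x * P (j - 1) x) ≤
      (s : ℝ) * (Ideal.absNorm (Idl ⟨0, hn⟩) : ℝ) ^ (-(1 : ℝ) / 2) *
        ∏ q ∈ PS, (1 - (Ideal.absNorm q : ℝ) ^ (-(1 : ℝ) / 2))⁻¹ := by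
  have hQle : ∀ i, Q ≤ Idl i := fun i => hQ ▸ iInf_le _ i
  have hcardQ : (0 : ℝ) < Fintype.card (𝓞 K ⧸ Q) := by
    exact_mod_cast Fintype.card_pos
  have hα0 : ∀ j ∈ Finset.Icc 1 J, ∀ x, 0 ≤ α j x := by
    intro j hj x
    rw [hα j hj x]
    positivity
  -- With vanishing distortion parameters the recursion leaves the measure unchanged.
  have hunif : ∀ k, k ≤ J → (∀ i ∈ Finset.Icc 1 J, i ≤ k → δ i = 0) →
      ∀ x, P k x = 1 / (Fintype.card (𝓞 K ⧸ Q) : ℝ) := by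
    intro k
    induction k with
    | zero => intro _ _ x; exact hP0 x
    | succ k ih =>
      intro hk hd x
      have hmem : k + 1 ∈ Finset.Icc 1 J := by simp; omega
      have hrec := hPrec (k + 1) hmem x
      have hprev := ih (by omega) (fun i hi hik => hd i hi (by omega)) x
      rw [hd _ hmem le_rfl, if_neg (not_lt.mpr (hα0 _ hmem x)), Nat.add_sub_cancel, hprev] at hrec
      rw [hrec]
      split_ifs with h0 h1
      · rfl
      · field_simp
        ring
      · field_simp
        ring
  have hmoment : ∀ j ∈ (Finset.Icc 1 J).filter (fun j => (Ideal.absNorm (p j) : ℝ) ≤ y),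
      (∑ x : 𝓞 K ⧸ Q, α j x * P (j - 1) x) ≤
        ∑ i ∈ Finset.univ.filter (fun i : Fin n => IsPmin (Idl i) (p j)),
          ((Ideal.absNorm (Idl i) : ℕ) : ℝ)⁻¹ := by
    intro j hj
    obtain ⟨hj, hjy⟩ := Finset.mem_filter.mp hj
    have hj' := Finset.mem_Icc.mp hj
    have hu := hunif (j - 1) (by omega) (fun i hi hij => hδ0 i hi
      (le_trans (by exact_mod_cast hpmono i hi j hj (by omega)) hjy))
    have h1 : (∑ x : 𝓞 K ⧸ Q, α j x * P (j - 1) x)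
        = ((B j).card : ℝ) / (Fintype.card (𝓞 K ⧸ Q) : ℝ) := by
      simp_rw [hu, hα j hj, hF]
      rw [← Finset.sum_mul, sum_coset_density, mul_one_div]
    rw [h1]
    have h2 : B j ⊆ (Finset.univ.filter (fun i : Fin n => IsPmin (Idl i) (p j))).biUnion
        (fun i => Finset.univ.filter fun x : 𝓞 K ⧸ Q =>
          x - Ideal.Quotient.mk Q (a i) ∈ (Idl i).map (Ideal.Quotient.mk Q)) := by
      intro x hx
      rw [hB j hj] at hx
      obtain ⟨i, hi, hxi⟩ := (Finset.mem_filter.mp hx).2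
      exact Finset.mem_biUnion.mpr ⟨i, by simpa using hi, by simpa using hxi⟩
    have h3 := (Finset.card_le_card h2).trans Finset.card_biUnion_le
    calc ((B j).card : ℝ) / (Fintype.card (𝓞 K ⧸ Q) : ℝ)
        ≤ ((∑ i ∈ Finset.univ.filter (fun i : Fin n => IsPmin (Idl i) (p j)),
            (Finset.univ.filter fun x : 𝓞 K ⧸ Q =>
              x - Ideal.Quotient.mk Q (a i) ∈ (Idl i).map (Ideal.Quotient.mk Q)).card : ℕ) : ℝ)
            / (Fintype.card (𝓞 K ⧸ Q) : ℝ) := by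
          gcongr
      _ = _ := by
          rw [Nat.cast_sum, Finset.sum_div]
          exact Finset.sum_congr rfl fun i _ => card_residue_class Q (Idl i) (hQle i) _
  set G : Finset (Fin n) := Finset.univ.filter
    (fun i => ∃ q : Ideal (𝓞 K), IsPmin (Idl i) q ∧ (Ideal.absNorm q : ℝ) ≤ y) with hG
  -- `P_min` is unique, so each index contributes to at most one `j`.
  have hPuniq : ∀ I q q' : Ideal (𝓞 K), IsPmin I q → IsPmin I q' → q = q' := by
    intro I q q' h h'
    by_contra hne
    have := h.2.2 q' h'.1 h'.2.1 (Ne.symm hne)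
    have := h'.2.2 q h.1 h.2.1 hne
    omega
  have hsum1 : ∑ j ∈ (Finset.Icc 1 J).filter (fun j => (Ideal.absNorm (p j) : ℝ) ≤ y),
      ∑ i ∈ Finset.univ.filter (fun i : Fin n => IsPmin (Idl i) (p j)),
          ((Ideal.absNorm (Idl i) : ℕ) : ℝ)⁻¹ ≤ ∑ i ∈ G, ((Ideal.absNorm (Idl i) : ℕ) : ℝ)⁻¹ := by
    rw [← Finset.sum_biUnion]
    · refine Finset.sum_le_sum_of_subset_of_nonneg ?_ (fun _ _ _ => by positivity)
      intro i hi
      obtain ⟨j, hj, hi⟩ := Finset.mem_biUnion.mp hi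
      rw [Finset.mem_filter] at hj hi
      exact Finset.mem_filter.mpr ⟨Finset.mem_univ _, p j, hi.2, hj.2⟩
    · intro j hj j' hj' hne
      have hj := (Finset.mem_filter.mp hj).1
      have hj' := (Finset.mem_filter.mp hj').1
      refine Finset.disjoint_left.mpr fun i hi hi' => hne ?_
      exact hpinj j hj j' hj' (hPuniq _ _ _ (Finset.mem_filter.mp hi).2 (Finset.mem_filter.mp hi').2)
  have hNpos : ∀ i, 0 < Ideal.absNorm (Idl i) := by
    intro i
    rw [Nat.pos_iff_ne_zero, Ne, Ideal.absNorm_eq_zero_iff]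
    exact (hdist i).1
  have hsplit : ∀ i, ((Ideal.absNorm (Idl i) : ℕ) : ℝ)⁻¹ ≤
      (Ideal.absNorm (Idl ⟨0, hn⟩) : ℝ) ^ (-(1 : ℝ) / 2) *
        (Ideal.absNorm (Idl i) : ℝ) ^ (-(1 : ℝ) / 2) := by
    intro i
    have hi : (0 : ℝ) < Ideal.absNorm (Idl i) := by exact_mod_cast hNpos i
    have h0 : (0 : ℝ) < Ideal.absNorm (Idl ⟨0, hn⟩) := by exact_mod_cast hNpos _
    have hle : (Ideal.absNorm (Idl ⟨0, hn⟩) : ℝ) ≤ Ideal.absNorm (Idl i) := by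
      exact_mod_cast hmono ⟨0, hn⟩ i (Fin.mk_le_of_le_val (Nat.zero_le _))
    have h1 : ((Ideal.absNorm (Idl i) : ℕ) : ℝ)⁻¹ =
        (Ideal.absNorm (Idl i) : ℝ) ^ (-(1 : ℝ) / 2) *
          (Ideal.absNorm (Idl i) : ℝ) ^ (-(1 : ℝ) / 2) := by
      rw [← Real.rpow_add hi, ← Real.rpow_neg_one]
      norm_num
    rw [h1]
    exact mul_le_mul_of_nonneg_right
      (Real.rpow_le_rpow_of_nonpos h0 hle (by norm_num)) (by positivity)
  have hmult : ∑ i ∈ G, (Ideal.absNorm (Idl i) : ℝ) ^ (-(1 : ℝ) / 2) ≤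
      (s : ℝ) * ∑ I ∈ G.image Idl, (Ideal.absNorm I : ℝ) ^ (-(1 : ℝ) / 2) := by
    rw [Finset.sum_comp (fun I : Ideal (𝓞 K) => (Ideal.absNorm I : ℝ) ^ (-(1 : ℝ) / 2)) Idl,
      Finset.mul_sum]
    refine Finset.sum_le_sum fun I _ => ?_
    rw [nsmul_eq_mul]
    have : (G.filter fun i => Idl i = I).card ≤ s :=
      (Finset.card_le_card (Finset.filter_subset_filter _ (Finset.subset_univ _))).trans (hsle I)
    gcongr
  have heuler : ∑ I ∈ G.image Idl, (Ideal.absNorm I : ℝ) ^ (-(1 : ℝ) / 2) ≤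
      ∏ q ∈ PS, (1 - (Ideal.absNorm q : ℝ) ^ (-(1 : ℝ) / 2))⁻¹ := by
    have hbot : ∏ q ∈ PS.filter (· ≠ ⊥), (1 - (Ideal.absNorm q : ℝ) ^ (-(1 : ℝ) / 2))⁻¹ =
        ∏ q ∈ PS, (1 - (Ideal.absNorm q : ℝ) ^ (-(1 : ℝ) / 2))⁻¹ := by
      refine Finset.prod_subset (Finset.filter_subset _ _) fun q hq hq' => ?_
      -- The zero ideal is prime, of norm `0`; its factor is `1` because `0 ^ (-1/2) = 0`.
      have : q = ⊥ := by
        by_contra h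
        exact hq' (Finset.mem_filter.mpr ⟨hq, h⟩)
      rw [this, Ideal.absNorm_bot, Nat.cast_zero, Real.zero_rpow (by norm_num)]
      norm_num
    rw [← hbot]
    refine sum_le_euler_product _ _ ?_ ?_
    · intro q hq
      obtain ⟨h1, h2⟩ := Finset.mem_filter.mp hq
      exact ⟨((hPS q).mp h1).1, h2⟩
    · intro I hI
      obtain ⟨i, hi, rfl⟩ := Finset.mem_image.mp hI
      obtain ⟨r, hr, hry⟩ := (Finset.mem_filter.mp hi).2
      refine ⟨(hdist i).1, fun q hq hqI => Finset.mem_filter.mpr ⟨(hPS q).mpr ⟨hq, ?_⟩, ?_⟩⟩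
      · by_cases h : q = r
        · rw [h]; exact hry
        · exact le_trans (by exact_mod_cast (hr.2.2 q hq hqI h).le) hry
      · rintro rfl
        exact (hdist i).1 (zero_dvd_iff.mp hqI)
  calc _ ≤ ∑ i ∈ G, ((Ideal.absNorm (Idl i) : ℕ) : ℝ)⁻¹ :=
        (Finset.sum_le_sum hmoment).trans hsum1
    _ ≤ ∑ i ∈ G, (Ideal.absNorm (Idl ⟨0, hn⟩) : ℝ) ^ (-(1 : ℝ) / 2) *
        (Ideal.absNorm (Idl i) : ℝ) ^ (-(1 : ℝ) / 2) := Finset.sum_le_sum fun i _ => hsplit i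
    _ = (Ideal.absNorm (Idl ⟨0, hn⟩) : ℝ) ^ (-(1 : ℝ) / 2) *
        ∑ i ∈ G, (Ideal.absNorm (Idl i) : ℝ) ^ (-(1 : ℝ) / 2) := by rw [Finset.mul_sum]
    _ ≤ (Ideal.absNorm (Idl ⟨0, hn⟩) : ℝ) ^ (-(1 : ℝ) / 2) *
        ((s : ℝ) * ∏ q ∈ PS, (1 - (Ideal.absNorm q : ℝ) ^ (-(1 : ℝ) / 2))⁻¹) := by
        refine mul_le_mul_of_nonneg_left (hmult.trans ?_) (by positivity)
        exact mul_le_mul_of_nonneg_left heuler (by positivity)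
    _ = _ := by ring
end
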